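/- Let Γ be a non-elementary hyperbolic group and μ a symmetric finitely supported probability measure whose support generates Γ, with Green metric d_G. For R > 0 let ∂B_G(w,R) = { x : x ∉ B_G(w,R) and there exists γ ∈ supp(μ) with γ^{-1}(x) ∈ B_G(w,R) } be the exterior sphere, and let ν_R be the law on ∂B_G(w,R) of the first point visited by the random walk outside B_G(w,R). Then there exist positive constants C₁ and C₂ such that for every R > 0 and every x ∈ ∂B_G(w,R) there exists y ∈ B_G(x,C₁) ∩ ∂B_G(w,R) with C₂ e^{−R} ≤ ν_R(y) ≤ e^{−R}; moreover ν_R(y) ≤ e^{−R} holds for every y ∈ ∂B_G(w,R). -/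

import Mathlib

open Filter MeasureTheory Topology Metric Set
open scoped ENNReal

noncomputable section

namespace GHM

/-! ### Coarse geometry of distance functions -/

/-- The Gromov product `(x|y)_w` of `x` and `y` seen from `w`, for a distance function `d`. -/
def gromov {X : Type*} (d : X → X → ℝ) (w x y : X) : ℝ :=
  (d x w + d y w - d x y) / 2

/-- `d` is `δ`-hyperbolic (four point condition on Gromov products). -/
def IsHyperbolicWith {X : Type*} (d : X → X → ℝ) (δ : ℝ) : Prop :=
  ∀ w x y z : X, min (gromov d w x y) (gromov d w x z) - δ ≤ gromov d w y z

/-- `d` is Gromov hyperbolic. -/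
def IsHyperbolic {X : Type*} (d : X → X → ℝ) : Prop :=
  ∃ δ : ℝ, 0 ≤ δ ∧ IsHyperbolicWith d δ

/-- `d` is a genuine metric. -/
structure IsMetricFun {X : Type*} (d : X → X → ℝ) : Prop where
  refl : ∀ x, d x x = 0
  pos : ∀ x y, x ≠ y → 0 < d x y
  symm : ∀ x y, d x y = d y x
  triangle : ∀ x y z, d x z ≤ d x y + d y z

/-- `f` is a `(Λ,c)`-quasi-isometric embedding from `(X,dX)` to `(Y,dY)`. -/
def QIEmbed {X Y : Type*} (dX : X → X → ℝ) (dY : Y → Y → ℝ)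
    (f : X → Y) (Λ c : ℝ) : Prop :=
  ∀ x x' : X, dX x x' / Λ - c ≤ dY (f x) (f x') ∧ dY (f x) (f x') ≤ Λ * dX x x' + c

/-- `(X,dX)` and `(Y,dY)` are quasi-isometric. -/
def QuasiIsometric {X Y : Type*} (dX : X → X → ℝ) (dY : Y → Y → ℝ) : Prop :=
  ∃ (f : X → Y) (Λ c C : ℝ), 1 ≤ Λ ∧ 0 ≤ c ∧ 0 ≤ C ∧
    QIEmbed dX dY f Λ c ∧ ∀ y : Y, ∃ x : X, dY (f x) y ≤ C

variable {G : Type*} [Group G]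

/-- Word length of `g` with respect to the (symmetrized) finite set `S`. -/
def wordLength (S : Finset G) (g : G) : ℕ :=
  sInf {n : ℕ | ∃ l : List G, l.length = n ∧ (∀ a ∈ l, a ∈ S ∨ a⁻¹ ∈ S) ∧ l.prod = g}

/-- The word metric associated with a finite generating set `S`. -/
def wordDist (S : Finset G) (x y : G) : ℝ := wordLength S (x⁻¹ * y)

/-- `S` generates the group. -/
def Generates (S : Finset G) : Prop := Subgroup.closure (S : Set G) = ⊤

/-- The standard metric on `ℤ`. -/
def intDist (m n : ℤ) : ℝ := |(m : ℝ) - (n : ℝ)|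

/-- `G` is a non-elementary hyperbolic group: finitely generated, its word metrics are
Gromov hyperbolic, it is infinite, and it is not quasi-isometric to `ℤ`. -/
def NonElemHyperbolic (G : Type*) [Group G] : Prop :=
  Infinite G ∧ (∃ S : Finset G, Generates S) ∧
    ∀ S : Finset G, Generates S →
      IsHyperbolic (wordDist S) ∧ ¬ QuasiIsometric (wordDist S) intDist

/-- `d` is invariant under left translations. -/
def LeftInvariant (d : G → G → ℝ) : Prop := ∀ g x y : G, d (g * x) (g * y) = d x y

/-- `d` belongs to the class `𝒟(Γ)`: it is a left-invariant Gromov hyperbolic metric on the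
group, quasi-isometric to a word metric of a finite generating set. -/
def MemD (d : G → G → ℝ) : Prop :=
  IsMetricFun d ∧ LeftInvariant d ∧ IsHyperbolic d ∧
    ∃ S : Finset G, Generates S ∧ QuasiIsometric d (wordDist S)

/-! ### Random walks -/

/-- `μ` is (the density of) a probability measure on the (countable) group. -/
def IsProbDensity (μ : G → ℝ) : Prop := (∀ g, 0 ≤ μ g) ∧ HasSum μ 1

/-- `μ` is symmetric. -/
def IsSymmetric (μ : G → ℝ) : Prop := ∀ g : G, μ g⁻¹ = μ g

/-- The support of `μ` generates `G`. -/
def GeneratesSupp (μ : G → ℝ) : Prop := Subgroup.closure {g : G | μ g ≠ 0} = ⊤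

open scoped Classical in
/-- Convolution powers `μ^n` of `μ`. -/
def convPow (μ : G → ℝ) : ℕ → G → ℝ
  | 0 => fun g => if g = 1 then 1 else 0
  | n + 1 => fun g => ∑' y : G, convPow μ n y * μ (y⁻¹ * g)

/-- The Green function `G(x,y) = ∑_n μ^n(x⁻¹y)`. -/
def greenFn (μ : G → ℝ) (x y : G) : ℝ := ∑' n : ℕ, convPow μ n (x⁻¹ * y)

/-- The random walk is transient, i.e. `G(e,e) = ∑_n μ^n(e) < ∞`. -/
def Transient (μ : G → ℝ) : Prop := Summable fun n : ℕ => convPow μ n (1 : G)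

/-- Successive positions of a walk started at `x` with increments `l`. -/
def walkPositions (x : G) (l : List G) : List G := l.scanl (fun p a => p * a) x

/-- The increments `l` describe a trajectory from `x` which hits `y` for the first time at
its final position. -/
def IsFirstHitPath (x y : G) (l : List G) : Prop :=
  (walkPositions x l).getLast? = some y ∧ y ∉ (walkPositions x l).dropLast

/-- `F(x,y)`: the probability that the `μ`-random walk started at `x` ever hits `y`. -/
def hitProb (μ : G → ℝ) (x y : G) : ℝ :=
  ∑' l : {l : List G // IsFirstHitPath x y l}, ((l : List G).map μ).prod

/-- The Green metric `d_G(x,y) = - log F(x,y)`. -/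
def greenDist (μ : G → ℝ) (x y : G) : ℝ := - Real.log (hitProb μ x y)

/-- `μ` has a finite first moment with respect to `d`. -/
def FiniteFirstMoment (d : G → G → ℝ) (μ : G → ℝ) : Prop :=
  Summable fun g : G => d 1 g * μ g

/-- `μ` has an exponential moment with respect to `d`. -/
def HasExpMoment (d : G → G → ℝ) (μ : G → ℝ) : Prop :=
  ∃ lam : ℝ, 0 < lam ∧ Summable fun g : G => Real.exp (lam * d 1 g) * μ g

/-- The entropy `H(μ^n) = -∑_γ μ^n(γ) log μ^n(γ)` of the `n`-th convolution power. -/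
def entropyAt (μ : G → ℝ) (n : ℕ) : ℝ :=
  - ∑' g : G, convPow μ n g * Real.log (convPow μ n g)

/-- `h` is the asymptotic entropy of the walk. -/
def HasEntropy (μ : G → ℝ) (h : ℝ) : Prop :=
  Tendsto (fun n : ℕ => entropyAt μ n / n) atTop (𝓝 h)

/-- `v` is the logarithmic volume growth of `(G,d)` (seen from the identity). -/
def HasGrowth (d : G → G → ℝ) (v : ℝ) : Prop :=
  Filter.limsup (fun R : ℝ => Real.log (Nat.card {g : G // d 1 g ≤ R}) / R) atTop = v

/-- The position `Z_n = ω_0 ω_1 ⋯ ω_{n-1}` of the random walk at time `n`, given the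
sequence of increments `ω`. -/
def walkPos (n : ℕ) (ω : ℕ → G) : G := ((List.range n).map ω).prod

/-- `P` is the law on the space of increment sequences of an i.i.d. sequence of law `μ`:
cylinders have product measure.  (This characterizes the path measure of the random walk.) -/
def IsWalkMeasure [MeasurableSpace G] (μ : G → ℝ) (P : Measure (ℕ → G)) : Prop :=
  IsProbabilityMeasure P ∧
    ∀ (n : ℕ) (g : Fin n → G),
      P {ω : ℕ → G | ∀ i : Fin n, ω (i : ℕ) = g i} = ∏ i : Fin n, ENNReal.ofReal (μ (g i))

/-! ### The Gromov boundary, visual metrics, harmonic and quasiconformal measures -/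

/-- A sequence tends to infinity if Gromov products (at the base point `1`) go to `∞`. -/
def TendstoInfinity (d : G → G → ℝ) (u : ℕ → G) : Prop :=
  Tendsto (fun p : ℕ × ℕ => gromov d 1 (u p.1) (u p.2)) atTop atTop

/-- A realization of the Gromov boundary of `(G,d)` as an abstract type `B`:
`conv u b` means that the sequence `u` converges at infinity to the boundary point `b`.
The group acts on its boundary by `smul`. -/
structure BoundaryData (G : Type*) [Group G] (d : G → G → ℝ) (B : Type*) where
  conv : (ℕ → G) → B → Prop
  smul : G → B → B
  conv_unique : ∀ u b b', conv u b → conv u b' → b = b'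
  exists_conv : ∀ u, TendstoInfinity d u → ∃ b, conv u b
  conv_tendstoInfinity : ∀ u b, conv u b → TendstoInfinity d u
  conv_iff : ∀ u v b, conv u b →
    (conv v b ↔ Tendsto (fun n => gromov d 1 (u n) (v n)) atTop atTop)
  conv_surj : ∀ b, ∃ u, conv u b
  smul_conv : ∀ (γ : G) (u) (b), conv u b → conv (fun n => γ * u n) (smul γ b)

/-- Asymptotic Gromov product of two sequences. -/
def seqGromov (d : G → G → ℝ) (u v : ℕ → G) : ℝ :=
  Filter.liminf (fun n => gromov d 1 (u n) (v n)) atTop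

/-- The metric of `B` is a visual metric of parameter `ε` (with comparison constant `C`)
for the hyperbolic distance `d` on the group:  `dist(a,b) ≍ exp(-ε (a|b))`. -/
def IsVisualMetric {B : Type*} [MetricSpace B] (d : G → G → ℝ)
    (bd : BoundaryData G d B) (ε C : ℝ) : Prop :=
  0 < ε ∧ 0 < C ∧
    ∀ u v b b', bd.conv u b → bd.conv v b' → b ≠ b' →
      dist b b' ≤ C * Real.exp (-ε * seqGromov d u v) ∧
      Real.exp (-ε * seqGromov d u v) ≤ C * dist b b'

/-- `ν` is the harmonic measure of the random walk of law `μ` on the boundary `B`: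
it is the law of the almost sure limit `Z_∞` of the walk on the boundary. -/
def IsHarmonicMeasure {B : Type*} [MeasurableSpace G] [MeasurableSpace B]
    (d : G → G → ℝ) (bd : BoundaryData G d B) (μ : G → ℝ)
    (P : Measure (ℕ → G)) (ν : Measure B) : Prop :=
  IsWalkMeasure μ P ∧
    ∃ Zinf : (ℕ → G) → B, Measurable Zinf ∧
      (∀ᵐ ω ∂P, bd.conv (fun n => walkPos n ω) (Zinf ω)) ∧ ν = P.map Zinf

/-- Busemann function `β_b(x,y)` of the boundary point `b`. -/
def busemann {B : Type*} (d : G → G → ℝ) (bd : BoundaryData G d B)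
    (x y : G) (b : B) : ℝ :=
  sSup {t : ℝ | ∃ u, bd.conv u b ∧
    t = Filter.limsup (fun n => d x (u n) - d y (u n)) atTop}

/-- The image measure `γ^*ρ`, `γ^*ρ(A) = ρ(γA)`. -/
def actPush {B : Type*} [MeasurableSpace B] {d : G → G → ℝ}
    (bd : BoundaryData G d B) (γ : G) (ρ : Measure B) : Measure B :=
  ρ.map (bd.smul γ⁻¹)

/-- `ρ` is a quasiconformal measure on the boundary for `(G,d)` of logarithmic growth
parameter `v`: `γ^*ρ` and `ρ` are mutually absolutely continuous, with density
`dγ^*ρ/dρ ≍ exp (v β_b(1,γ⁻¹))` (uniformly in `γ`). -/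
def IsQuasiconformalMeasure {B : Type*} [MeasurableSpace B] {d : G → G → ℝ}
    (bd : BoundaryData G d B) (ρ : Measure B) (v : ℝ) : Prop :=
  ∃ C : ℝ, 0 < C ∧ ∀ γ : G,
    actPush bd γ ρ ≪ ρ ∧ ρ ≪ actPush bd γ ρ ∧
      ∀ᵐ b ∂ρ,
        (actPush bd γ ρ).rnDeriv ρ b
            ≤ ENNReal.ofReal (C * Real.exp (v * busemann d bd 1 γ⁻¹ b)) ∧
        ENNReal.ofReal (C⁻¹ * Real.exp (v * busemann d bd 1 γ⁻¹ b))
            ≤ (actPush bd γ ρ).rnDeriv ρ b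

/-- `ν` is Ahlfors regular of dimension `α`: `ν(B(b,r)) ≍ r^α`. -/
def AhlforsRegularOfDim {B : Type*} [MetricSpace B] [MeasurableSpace B]
    (ν : Measure B) (α : ℝ) : Prop :=
  ∃ C : ℝ, 0 < C ∧ ∀ (b : B) (r : ℝ), 0 < r → r ≤ Metric.diam (Set.univ : Set B) →
    ENNReal.ofReal (C⁻¹ * r ^ α) ≤ ν (Metric.ball b r) ∧
      ν (Metric.ball b r) ≤ ENNReal.ofReal (C * r ^ α)

/-- The Hausdorff dimension of a measure: the infimum of the Hausdorff dimensions of sets of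
full measure. -/
def measureDim {B : Type*} [EMetricSpace B] [MeasurableSpace B] (ν : Measure B) : ℝ≥0∞ :=
  ⨅ (A : Set B) (_ : ν Aᶜ = 0), dimH A

/-! ### Word geodesics -/

/-- `p 0, …, p n` is a geodesic segment for the word metric of `S`. -/
def IsWordGeodesic (S : Finset G) (n : ℕ) (p : ℕ → G) : Prop :=
  ∀ i j : ℕ, i ≤ n → j ≤ n → wordDist S (p i) (p j) = |(i : ℝ) - (j : ℝ)|

/-- `v` lies within distance `r` of some word geodesic segment from `x` to `y`. -/
def NearWordGeodesic (S : Finset G) (x y v : G) (r : ℝ) : Prop :=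
  ∃ (n : ℕ) (p : ℕ → G), IsWordGeodesic S n p ∧ p 0 = x ∧ p n = y ∧
    ∃ i ≤ n, wordDist S v (p i) ≤ r

/-! ### Martin boundary -/

/-- The Martin kernel `K(x,y) = G(x,y)/G(e,y)`. -/
def martinKernel (μ : G → ℝ) (x y : G) : ℝ := greenFn μ x y / greenFn μ 1 y

/-- The embedding `y ↦ K(·,y)` of the group in `C(G)` (pointwise topology). -/
def martinMap (μ : G → ℝ) (y : G) : G → ℝ := fun x => martinKernel μ x y

/-- The Martin boundary: the boundary of the image of the group under the Martin embedding
in the space of functions with the topology of pointwise convergence. -/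
def martinBoundary (μ : G → ℝ) : Set (G → ℝ) :=
  closure (Set.range (martinMap μ)) \ Set.range (martinMap μ)

/-- `h` is a `μ`-harmonic function. -/
def IsHarmonicFn (μ : G → ℝ) (h : G → ℝ) : Prop :=
  ∀ x : G, h x = ∑' y : G, h y * μ (x⁻¹ * y)

/-- `h` is a minimal positive harmonic function. -/
def IsMinimalHarmonic (μ : G → ℝ) (h : G → ℝ) : Prop :=
  IsHarmonicFn μ h ∧ (∀ x, 0 < h x) ∧
    ∀ u : G → ℝ, IsHarmonicFn μ u → (∀ x, 0 ≤ u x) → (∀ x, u x ≤ h x) →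
      ∃ c : ℝ, u = fun x => c * h x

/-! ### Metric space versions (geodesic and quasiruled spaces) -/

/-- A geodesic metric space. -/
def IsGeodesicSpace (X : Type*) [MetricSpace X] : Prop :=
  ∀ x y : X, ∃ f : ℝ → X, f 0 = x ∧ f (dist x y) = y ∧
    ∀ s ∈ Set.Icc (0:ℝ) (dist x y), ∀ t ∈ Set.Icc (0:ℝ) (dist x y),
      dist (f s) (f t) = |s - t|

/-- `f : [a,b] → Y` is a `(Λ,c)`-quasigeodesic segment. -/
def IsQuasigeodesicOn {Y : Type*} [MetricSpace Y] (f : ℝ → Y) (a b Λ c : ℝ) : Prop :=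
  ∀ s ∈ Set.Icc a b, ∀ t ∈ Set.Icc a b,
    |s - t| / Λ - c ≤ dist (f s) (f t) ∧ dist (f s) (f t) ≤ Λ * |s - t| + c

/-- `f : [a,b] → Y` is a `τ`-quasiruler: Gromov products of triples along it are `≤ τ`. -/
def IsQuasirulerOn {Y : Type*} [MetricSpace Y] (f : ℝ → Y) (a b τ : ℝ) : Prop :=
  ∀ s t u : ℝ, s ∈ Set.Icc a b → t ∈ Set.Icc a b → u ∈ Set.Icc a b → s ≤ t → t ≤ u →
    dist (f s) (f t) + dist (f t) (f u) ≤ dist (f s) (f u) + 2 * τ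

/-- A quasiruled metric space: for some constants `(Λ,c,τ)` every pair of points is joined
by a `(Λ,c)`-quasigeodesic, and every `(Λ,c)`-quasigeodesic is a `τ`-quasiruler. -/
def Quasiruled (Y : Type*) [MetricSpace Y] : Prop :=
  ∃ Λ c τ : ℝ, 1 ≤ Λ ∧ 0 ≤ c ∧ 0 ≤ τ ∧
    (∀ x y : Y, ∃ (a b : ℝ) (f : ℝ → Y), a ≤ b ∧ f a = x ∧ f b = y ∧
      IsQuasigeodesicOn f a b Λ c) ∧
    ∀ (f : ℝ → Y) (a b : ℝ), IsQuasigeodesicOn f a b Λ c → IsQuasirulerOn f a b τ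

/-- A metric space is hyperbolic. -/
def HypSpace (Y : Type*) [MetricSpace Y] : Prop :=
  IsHyperbolic (fun x y : Y => dist x y)

/-- `f` is a quasi-isometry between metric spaces. -/
def MetricQI {X Y : Type*} [MetricSpace X] [MetricSpace Y] (f : X → Y) : Prop :=
  ∃ Λ c C : ℝ, 1 ≤ Λ ∧ 0 ≤ c ∧ 0 ≤ C ∧
    QIEmbed (fun a b : X => dist a b) (fun a b : Y => dist a b) f Λ c ∧
    ∀ y : Y, ∃ x : X, dist (f x) y ≤ C


/-- The exterior sphere of the Green ball `B_G(e,R)`. -/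
def greenSphere (μ : G → ℝ) (R : ℝ) : Set G :=
  {x : G | ¬ greenDist μ 1 x ≤ R ∧ ∃ γ : G, μ γ ≠ 0 ∧ greenDist μ 1 (x * γ⁻¹) ≤ R}

/-- The harmonic measure on the exterior sphere: `exitLaw μ P R y` is the probability that
the first point visited by the walk outside the Green ball `B_G(e,R)` is `y`. -/
def exitLaw [MeasurableSpace G] (μ : G → ℝ) (P : Measure (ℕ → G)) (R : ℝ) (y : G) :
    ℝ≥0∞ :=
  P {ω : ℕ → G | ∃ n : ℕ, (∀ k < n, greenDist μ 1 (walkPos k ω) ≤ R) ∧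
      ¬ greenDist μ 1 (walkPos n ω) ≤ R ∧ walkPos n ω = y}

section Part1
section wordmetric

lemma wl_exists {S : Finset G} (hS : Generates S) (g : G) :
    ∃ l : List G, l.length = wordLength S g ∧ (∀ a ∈ l, a ∈ S ∨ a⁻¹ ∈ S) ∧ l.prod = g := by
  have hne : {n : ℕ | ∃ l : List G, l.length = n ∧ (∀ a ∈ l, a ∈ S ∨ a⁻¹ ∈ S) ∧
      l.prod = g}.Nonempty := by
    have hg : g ∈ Subgroup.closure (S : Set G) := by
      rw [show Subgroup.closure (S : Set G) = ⊤ from hS]; trivial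
    rw [← Subgroup.mem_toSubmonoid, Subgroup.closure_toSubmonoid] at hg
    obtain ⟨l, hl, hp⟩ := Submonoid.exists_list_of_mem_closure hg
    have hl : ∀ a ∈ l, a ∈ S ∨ a⁻¹ ∈ S := by simpa using hl
    exact ⟨l.length, l, rfl, hl, hp⟩
  exact Nat.sInf_mem hne

lemma wl_le {S : Finset G} (l : List G) (hl : ∀ a ∈ l, a ∈ S ∨ a⁻¹ ∈ S) :
    wordLength S l.prod ≤ l.length := Nat.sInf_le ⟨l, rfl, hl, rfl⟩

lemma wl_one (S : Finset G) : wordLength S 1 = 0 := by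
  have := wl_le (S := S) [] (by simp)
  simpa using this

lemma wl_gen {S : Finset G} {s : G} (hs : s ∈ S) : wordLength S s ≤ 1 := by
  have := wl_le (S := S) [s] (by simp [hs])
  simpa using this

lemma wl_mul {S : Finset G} (hS : Generates S) (g h : G) :
    wordLength S (g * h) ≤ wordLength S g + wordLength S h := by
  obtain ⟨l, hl, hl', rfl⟩ := wl_exists hS g
  obtain ⟨k, hk, hk', rfl⟩ := wl_exists hS h
  have := wl_le (S := S) (l ++ k) (by
    intro a ha; rcases List.mem_append.1 ha with h | h
    · exact hl' a h
    · exact hk' a h)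
  rw [List.prod_append, List.length_append] at this
  omega

lemma wl_inv_le {S : Finset G} (hS : Generates S) (g : G) :
    wordLength S g⁻¹ ≤ wordLength S g := by
  obtain ⟨l, hl, hl', hp⟩ := wl_exists hS g
  have := wl_le (S := S) (l.map (fun x => x⁻¹)).reverse (by
    intro a ha
    simp only [List.mem_reverse, List.mem_map] at ha
    obtain ⟨b, hb, rfl⟩ := ha
    rcases hl' b hb with h | h
    · right; simpa using h
    · left; exact h)
  rw [← List.prod_inv_reverse, hp] at this
  simpa [hl] using this

lemma wl_inv {S : Finset G} (hS : Generates S) (g : G) :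
    wordLength S g⁻¹ = wordLength S g := by
  apply le_antisymm (wl_inv_le hS g)
  simpa using wl_inv_le hS g⁻¹

lemma wl_eq_zero {S : Finset G} (hS : Generates S) {g : G} (h : wordLength S g = 0) : g = 1 := by
  obtain ⟨l, hl, hl', hp⟩ := wl_exists hS g
  rw [h, List.length_eq_zero_iff] at hl
  subst hl; simpa using hp.symm

/-- points on geodesics -/
lemma wl_geod {S : Finset G} (hS : Generates S) (g : G) {k : ℕ} (hk : k ≤ wordLength S g) :
    ∃ h, wordLength S h = k ∧ wordLength S (h⁻¹ * g) = wordLength S g - k := by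
  obtain ⟨l, hl, hl', hp⟩ := wl_exists hS g
  refine ⟨(l.take k).prod, ?_⟩
  have h1 := wl_le (S := S) (l.take k) (fun a ha => hl' a (List.mem_of_mem_take ha))
  have h2 := wl_le (S := S) (l.drop k) (fun a ha => hl' a (List.mem_of_mem_drop ha))
  have h3 : (l.take k).prod * (l.drop k).prod = g := by
    rw [← List.prod_append, List.take_append_drop, hp]
  have h4 : (l.take k).prod⁻¹ * g = (l.drop k).prod := by rw [← h3]; group
  rw [h4]
  have h5 := wl_mul hS (l.take k).prod (l.drop k).prod
  rw [h3] at h5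
  rw [List.length_take] at h1
  rw [List.length_drop] at h2
  omega

/-- a full geodesic from 1 to g -/
lemma wl_geodpath {S : Finset G} (hS : Generates S) (g : G) :
    ∃ p : ℕ → G, p 0 = 1 ∧ p (wordLength S g) = g ∧
      ∀ i j, i ≤ j → j ≤ wordLength S g → wordLength S ((p i)⁻¹ * p j) = j - i := by
  obtain ⟨l, hl, hl', hp⟩ := wl_exists hS g
  refine ⟨fun k => (l.take k).prod, by simp, by rw [← hl]; simpa using hp, ?_⟩
  intro i j hij hj
  have key : ∀ i j, i ≤ j → j ≤ wordLength S g →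
      wordLength S ((l.take i).prod⁻¹ * (l.take j).prod) ≤ j - i := by
    intro i j hij hj
    have h3 : (l.take i).prod⁻¹ * (l.take j).prod = ((l.take j).drop i).prod := by
      rw [inv_mul_eq_iff_eq_mul]
      conv_rhs => rw [show l.take i = (l.take j).take i by rw [List.take_take, min_eq_left hij]]
      rw [← List.prod_append, List.take_append_drop]
    rw [h3]
    refine (wl_le _ (fun a ha => hl' a (List.mem_of_mem_take (List.mem_of_mem_drop ha)))).trans ?_
    rw [List.length_drop, List.length_take]; omega
  have a1 := key i j hij hj
  have a2 := key 0 i (Nat.zero_le _) (hij.trans hj)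
  have a3 := key j _ hj le_rfl
  have a4 : g = ((l.take 0).prod⁻¹ * (l.take i).prod) * (((l.take i).prod⁻¹ * (l.take j).prod) *
      ((l.take j).prod⁻¹ * (l.take (wordLength S g)).prod)) := by
    rw [← hl, List.take_length, hp]; simp
  have a5 := wl_mul hS ((l.take 0).prod⁻¹ * (l.take i).prod) (((l.take i).prod⁻¹ * (l.take j).prod) *
      ((l.take j).prod⁻¹ * (l.take (wordLength S g)).prod))
  have a6 := wl_mul hS ((l.take i).prod⁻¹ * (l.take j).prod)
      ((l.take j).prod⁻¹ * (l.take (wordLength S g)).prod)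
  rw [← a4] at a5
  show wordLength S ((l.take i).prod⁻¹ * (l.take j).prod) = j - i
  omega

open scoped Classical in
/-- word balls as finsets, with exponential volume bound -/
lemma wl_ball {S : Finset G} (hS : Generates S) :
    ∃ V : ℕ, 1 ≤ V ∧ ∀ n : ℕ, ∃ B : Finset G, (∀ g, g ∈ B ↔ wordLength S g ≤ n) ∧ B.card ≤ V ^ n := by
  classical
  let T : Finset G := insert 1 (S ∪ S.image (fun x => x⁻¹))
  have hT : ∀ a, (a = 1 ∨ a ∈ S ∨ a⁻¹ ∈ S) ↔ a ∈ T := by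
    intro a
    simp only [T, Finset.mem_insert, Finset.mem_union, Finset.mem_image]
    constructor
    · rintro (h | h | h)
      · exact Or.inl h
      · exact Or.inr (Or.inl h)
      · exact Or.inr (Or.inr ⟨_, h, inv_inv a⟩)
    · rintro (h | h | ⟨b, hb, rfl⟩)
      · exact Or.inl h
      · exact Or.inr (Or.inl h)
      · exact Or.inr (Or.inr (by simpa using hb))
  have hT1 : ∀ a ∈ T, wordLength S a ≤ 1 := by
    intro a ha
    rcases (hT a).2 ha with rfl | h | h
    · rw [wl_one]; omega
    · exact wl_gen h
    · rw [← wl_inv hS]; exact wl_gen h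
  refine ⟨T.card, Finset.card_pos.2 ⟨1, by simp [T]⟩, ?_⟩
  intro n
  induction n with
  | zero =>
    refine ⟨{1}, ?_, by simp⟩
    intro g
    simp only [Finset.mem_singleton]
    constructor
    · rintro rfl; rw [wl_one]
    · intro h; exact wl_eq_zero hS (Nat.le_zero.1 h)
  | succ n ih =>
    obtain ⟨B, hB, hc⟩ := ih
    refine ⟨(B ×ˢ T).image (fun p => p.1 * p.2), ?_, ?_⟩
    · intro g
      simp only [Finset.mem_image, Finset.mem_product, Prod.exists]
      constructor
      · rintro ⟨a, b, ⟨ha, hb⟩, rfl⟩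
        have := wl_mul hS a b
        have := (hB a).1 ha
        have := hT1 b hb
        omega
      · intro h
        by_cases hg : wordLength S g ≤ n
        · exact ⟨g, 1, ⟨(hB g).2 hg, by simp [T]⟩, by simp⟩
        · have hg' : wordLength S g = n + 1 := by omega
          obtain ⟨l, hl, hl', hp⟩ := wl_exists hS g
          obtain ⟨h, h1, h2⟩ := wl_geod hS g (k := n) (by omega)
          refine ⟨h, h⁻¹ * g, ⟨(hB h).2 (by omega), ?_⟩, by group⟩
          obtain ⟨k, hk, hk', hkp⟩ := wl_exists hS (h⁻¹ * g)
          have : k.length = 1 := by omega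
          obtain ⟨a, rfl⟩ := List.length_eq_one_iff.1 this
          rw [← hkp]
          simp only [List.prod_cons, List.prod_nil, mul_one]
          exact (hT a).1 (Or.inr (hk' a (by simp)))
    · refine Finset.card_image_le.trans ?_
      rw [Finset.card_product, pow_succ]
      exact Nat.mul_le_mul_right _ hc

lemma wd_self (S : Finset G) (x : G) : wordDist S x x = 0 := by
  simp [wordDist, wl_one]

lemma wd_nonneg (S : Finset G) (x y : G) : 0 ≤ wordDist S x y := by
  simp [wordDist]

lemma wd_symm {S : Finset G} (hS : Generates S) (x y : G) : wordDist S x y = wordDist S y x := by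
  rw [wordDist, wordDist, ← wl_inv hS]; simp

lemma wd_tri {S : Finset G} (hS : Generates S) (x y z : G) :
    wordDist S x z ≤ wordDist S x y + wordDist S y z := by
  have := wl_mul hS (x⁻¹ * y) (y⁻¹ * z)
  rw [show x⁻¹ * y * (y⁻¹ * z) = x⁻¹ * z by group] at this
  simp only [wordDist]; exact_mod_cast this

lemma wd_left (S : Finset G) (g x y : G) : wordDist S (g * x) (g * y) = wordDist S x y := by
  simp only [wordDist]; congr 2; group

lemma gr_left (S : Finset G) (g w x y : G) :
    gromov (wordDist S) (g * w) (g * x) (g * y) = gromov (wordDist S) w x y := by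
  simp only [gromov, wd_left]

lemma gr_symm {S : Finset G} (hS : Generates S) (w x y : G) :
    gromov (wordDist S) w x y = gromov (wordDist S) w y x := by
  simp only [gromov, wd_symm hS x y]; ring

end wordmetric

end Part1

section Part2
section branching

lemma gp_def (S : Finset G) (hS : Generates S) (x y : G) : gromov (wordDist S) 1 x y =
    ((wordLength S x : ℝ) + wordLength S y - wordLength S (x⁻¹ * y)) / 2 := by
  simp only [gromov, wordDist, mul_one, wl_inv hS]

lemma exists_len {S : Finset G} (hS : Generates S) [Infinite G] (n : ℕ) :
    ∃ g, wordLength S g = n := by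
  obtain ⟨V, -, hV⟩ := wl_ball hS
  obtain ⟨B, hB, -⟩ := hV n
  obtain ⟨g, hg⟩ := Infinite.exists_notMem_finset B
  rw [hB] at hg
  obtain ⟨h, h1, -⟩ := wl_geod hS g (k := n) (by omega)
  exact ⟨h, h1⟩

lemma exists_line {S : Finset G} (hS : Generates S) [Infinite G] :
    ∃ γ : ℤ → G, γ 0 = 1 ∧ ∀ i j, wordLength S ((γ i)⁻¹ * γ j) = (i - j).natAbs := by
  have h1 : ∀ n : ℕ, ∃ γ : ℤ → G, γ 0 = 1 ∧ ∀ i j : ℤ, i.natAbs ≤ n → j.natAbs ≤ n →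
      wordLength S ((γ i)⁻¹ * γ j) = (i - j).natAbs := by
    intro n
    obtain ⟨g, hg⟩ := exists_len hS (2 * n)
    obtain ⟨p, hp0, hp1, hp⟩ := wl_geodpath hS g
    refine ⟨fun k => (p n)⁻¹ * p (n + k).toNat, by simp, ?_⟩
    intro i j hi hj
    have e : ∀ a b : G, ((p n)⁻¹ * a)⁻¹ * ((p n)⁻¹ * b) = a⁻¹ * b := by intro a b; group
    simp only [e]
    rcases le_total i j with h | h
    · rw [hp _ _ (by omega) (by omega)]; omega
    · rw [← wl_inv hS, mul_inv_rev, inv_inv, hp _ _ (by omega) (by omega)]; omega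
  choose γ hγ0 hγ using h1
  have h2 : ∀ k : ℤ, ∃ v : G, ∀ᶠ n in (hyperfilter ℕ : Filter ℕ), γ n k = v := by
    intro k
    obtain ⟨V, -, hV⟩ := wl_ball hS
    obtain ⟨B, hB, -⟩ := hV k.natAbs
    have : ∀ᶠ n in (hyperfilter ℕ : Filter ℕ), ∃ v ∈ B, γ n k = v := by
      have : ∀ᶠ n : ℕ in (hyperfilter ℕ : Filter ℕ), k.natAbs ≤ n :=
        (Nat.hyperfilter_le_atTop) (eventually_ge_atTop _)
      filter_upwards [this] with n hn
      refine ⟨_, ?_, rfl⟩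
      rw [hB]
      have := hγ n 0 k (by simp) hn
      rw [hγ0] at this
      simp at this
      omega
    by_contra hcon
    push Not at hcon
    have h3 : ∀ v ∈ B, ∀ᶠ n in (hyperfilter ℕ : Filter ℕ), γ n k ≠ v := by
      intro v _
      exact hcon v
    have h4 := (Filter.eventually_all_finset B).2 h3
    obtain ⟨n, ⟨v, hv, hv'⟩, hn⟩ := (this.and h4).exists
    exact hn v hv hv'
  choose γ' hγ' using h2
  refine ⟨γ', ?_, ?_⟩
  · obtain ⟨n, hn⟩ := (hγ' 0).exists
    rw [← hn, hγ0]
  · intro i j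
    have : ∀ᶠ n : ℕ in (hyperfilter ℕ : Filter ℕ), i.natAbs + j.natAbs ≤ n :=
        (Nat.hyperfilter_le_atTop) (eventually_ge_atTop _)
    obtain ⟨n, ⟨hn1, hn2⟩, hn⟩ := (((hγ' i).and (hγ' j)).and this).exists
    rw [← hn1, ← hn2]
    exact hγ n i j (by omega) (by omega)

lemma ray_gp {S : Finset G} (hS : Generates S) {δ : ℝ} (hδ : IsHyperbolicWith (wordDist S) δ)
    (x : G) (r : ℕ → G) (hr0 : r 0 = 1)
    (hr : ∀ i j, i ≤ j → wordLength S ((r i)⁻¹ * r j) = j - i)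
    (hx : ∀ k, wordLength S x ≤ wordLength S (x⁻¹ * r k)) (t : ℕ) :
    gromov (wordDist S) 1 x (r t) ≤ 2 * δ + 1 := by
  have hrl : ∀ k, wordLength S (r k) = k := by
    intro k; have := hr 0 k (Nat.zero_le _); rw [hr0] at this; simpa using this
  rcases lt_or_ge (gromov (wordDist S) 1 x (r t)) 0 with h0 | h0
  · have h := hδ 1 1 1 1
    simp [gromov, wd_self] at h
    linarith
  set s := gromov (wordDist S) 1 x (r t) with hs
  have hsd := hs
  rw [gp_def S hS, hrl] at hsd
  have hst : s ≤ t := by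
    have h2 := wl_mul hS (r t) ((r t)⁻¹ * x)
    rw [show r t * ((r t)⁻¹ * x) = x by group, hrl, ← wl_inv hS ((r t)⁻¹ * x)] at h2
    rw [show ((r t)⁻¹ * x)⁻¹ = x⁻¹ * r t by group] at h2
    have h2' : (wordLength S x : ℝ) ≤ t + wordLength S (x⁻¹ * r t) := by exact_mod_cast h2
    rw [hsd]; linarith
  set k := ⌊s⌋₊ with hk
  have hk1 : (k : ℝ) ≤ s := Nat.floor_le h0
  have hk2 : s < k + 1 := Nat.lt_floor_add_one s
  have hkt : k ≤ t := by exact_mod_cast hk1.trans hst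
  have h1 := hδ 1 (r t) x (r k)
  rw [gr_symm hS 1 (r t) x, ← hs] at h1
  have h3 : gromov (wordDist S) 1 (r t) (r k) = k := by
    rw [gr_symm hS, gp_def S hS, hrl, hrl, hr k t hkt, Nat.cast_sub hkt]; ring
  rw [h3, min_eq_right hk1, gp_def S hS, hrl] at h1
  have h4 : (wordLength S x : ℝ) ≤ wordLength S (x⁻¹ * r k) := by exact_mod_cast hx k
  linarith

lemma trunc {S : Finset G} (hS : Generates S) (x : G) {k : ℕ} (hk : k ≤ wordLength S x) :
    ∃ x', wordLength S x' = k ∧ gromov (wordDist S) 1 x x' = k ∧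
      ∀ y, gromov (wordDist S) 1 x' y ≤ gromov (wordDist S) 1 x y := by
  obtain ⟨h, h1, h2⟩ := wl_geod hS x hk
  refine ⟨h, h1, ?_, ?_⟩
  · rw [gr_symm hS, gp_def S hS, h1, h2, Nat.cast_sub hk]; ring
  · intro y
    rw [gp_def S hS, gp_def S hS, h1]
    have := wl_mul hS (x⁻¹ * h) (h⁻¹ * y)
    rw [show x⁻¹ * h * (h⁻¹ * y) = x⁻¹ * y by group] at this
    rw [← wl_inv hS, mul_inv_rev, inv_inv, ← wl_inv hS (x⁻¹ * h), mul_inv_rev, inv_inv, h2] at this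
    rw [← wl_inv hS (x⁻¹ * y), mul_inv_rev, inv_inv]
    have h3 : (wordLength S (y⁻¹ * x) : ℝ) ≤ (wordLength S x - k : ℕ) + wordLength S (h⁻¹ * y) := by
      exact_mod_cast this
    rw [Nat.cast_sub hk] at h3
    linarith

lemma tripod {S : Finset G} (hS : Generates S) {δ : ℝ} (hδ : IsHyperbolicWith (wordDist S) δ)
    [Infinite G] (hq : ¬ QuasiIsometric (wordDist S) intDist) (L : ℕ) :
    ∃ a : Fin 3 → G, (∀ i, wordLength S (a i) = L) ∧
      ∀ i j, i ≠ j → gromov (wordDist S) 1 (a i) (a j) ≤ 2 * δ + 1 := by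
  have hδ0 : 0 ≤ δ := by
    have h := hδ 1 1 1 1
    simp [gromov, wd_self] at h
    linarith
  obtain ⟨γ, hγ0, hγ⟩ := exists_line hS
  have hfar : ∃ x, ∀ n, L ≤ wordLength S (x⁻¹ * γ n) := by
    by_contra hcon
    push Not at hcon
    apply hq
    choose f hf using hcon
    have hf' : ∀ x, wordDist S x (γ (f x)) ≤ L := fun x => by
      simp only [wordDist]; exact_mod_cast (hf x).le
    have hγd : ∀ i j, wordDist S (γ i) (γ j) = intDist i j := by
      intro i j
      rw [wordDist, hγ, intDist, Nat.cast_natAbs]; push_cast; rfl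
    refine ⟨f, 1, 2 * L, L, le_rfl, by positivity, by positivity, ?_, ?_⟩
    · intro x y
      rw [← hγd]
      have h1 := wd_tri hS x (γ (f x)) y
      have h2 := wd_tri hS (γ (f x)) (γ (f y)) y
      have h3 := wd_tri hS (γ (f x)) x (γ (f y))
      have h4 := wd_tri hS x y (γ (f y))
      have h5 := hf' x
      have h6 := hf' y
      rw [wd_symm hS (γ (f y)) y] at h2
      rw [wd_symm hS (γ (f x)) x] at h3
      constructor <;> linarith
    · intro n
      refine ⟨γ n, ?_⟩
      rw [← hγd, wd_symm hS]
      exact hf' _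
  obtain ⟨x, hx⟩ := hfar
  obtain ⟨n0, hn0⟩ : ∃ n0, ∀ n, wordLength S (x⁻¹ * γ n0) ≤ wordLength S (x⁻¹ * γ n) := by
    let f : ℤ → ℕ := fun n => wordLength S (x⁻¹ * γ n)
    exact ⟨Function.argmin f, fun n => Function.argmin_le f n⟩
  set x' := (γ n0)⁻¹ * x with hx'
  have hx'l : wordLength S x' = wordLength S (x⁻¹ * γ n0) := by
    rw [← wl_inv hS]; congr 1; rw [hx']; group
  obtain ⟨y, hy1, -, hy3⟩ := trunc hS x' (k := L) (by rw [hx'l]; exact hx _)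
  let r : ℤ → G := fun k => (γ n0)⁻¹ * γ (n0 + k)
  have hr0 : r 0 = 1 := by simp [r]
  have hrr : ∀ i j, wordLength S ((r i)⁻¹ * r j) = (i - j).natAbs := by
    intro i j
    have := hγ (n0 + i) (n0 + j)
    rw [show (r i)⁻¹ * r j = (γ (n0 + i))⁻¹ * γ (n0 + j) by simp only [r]; group, this]
    congr 1; ring
  have hrl : ∀ i, wordLength S (r i) = i.natAbs := by
    intro i; have := hrr 0 i; rw [hr0] at this; simpa using this
  have hxr : ∀ k, wordLength S x' ≤ wordLength S (x'⁻¹ * r k) := by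
    intro k
    rw [hx'l, show x'⁻¹ * r k = x⁻¹ * γ (n0 + k) by simp only [r, hx']; group]
    exact hn0 _
  have A1 := ray_gp hS hδ x' (fun k => r k) (by simpa using hr0)
    (fun i j hij => by rw [hrr]; omega) (fun k => hxr _) L
  have A2 := ray_gp hS hδ x' (fun k => r (-k)) (by simpa using hr0)
    (fun i j hij => by rw [hrr]; omega) (fun k => hxr _) L
  have B1 := (hy3 (r L)).trans A1
  have B2 := (hy3 (r (-L))).trans A2
  have B3 : gromov (wordDist S) 1 (r L) (r (-L)) ≤ 2 * δ + 1 := by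
    rw [gp_def S hS, hrl, hrl, hrr]
    have : ((L : ℤ) - -(L : ℤ)).natAbs = 2 * L := by omega
    rw [this]; simp; linarith
  refine ⟨![r L, r (-L), y], ?_, ?_⟩
  · intro i; fin_cases i <;> simp [hrl, hy1]
  · have C1 := B1; have C2 := B2; have C3 := B3
    rw [gr_symm hS] at C1 C2 C3
    intro i j hij
    fin_cases i <;> fin_cases j <;> first | exact absurd rfl hij | assumption

lemma tripod_good {S : Finset G} {δ c : ℝ} (hS : Generates S)
    (hδ : IsHyperbolicWith (wordDist S) δ) (a : Fin 3 → G)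
    (ha : ∀ i j, i ≠ j → gromov (wordDist S) 1 (a i) (a j) ≤ c) (g : G) :
    ∃ i j, i ≠ j ∧ gromov (wordDist S) 1 (a i) g ≤ c + δ ∧
      gromov (wordDist S) 1 (a j) g ≤ c + δ := by
  have key : ∀ i j, i ≠ j → gromov (wordDist S) 1 (a i) g ≤ c + δ ∨
      gromov (wordDist S) 1 (a j) g ≤ c + δ := by
    intro i j hij
    have h1 := hδ 1 g (a i) (a j)
    have h2 := ha i j hij
    rw [gr_symm hS 1 g, gr_symm hS 1 g] at h1
    by_contra! hcon
    have := lt_min hcon.1 hcon.2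
    linarith
  by_cases h0 : gromov (wordDist S) 1 (a 0) g ≤ c + δ
  · rcases key 1 2 (by decide) with h | h
    · exact ⟨0, 1, by decide, h0, h⟩
    · exact ⟨0, 2, by decide, h0, h⟩
  · exact ⟨1, 2, by decide, (key 0 1 (by decide)).resolve_left h0,
      (key 0 2 (by decide)).resolve_left h0⟩

lemma branch {S : Finset G} (hS : Generates S) {δ : ℝ} (hδ : IsHyperbolicWith (wordDist S) δ)
    [Infinite G] (hq : ¬ QuasiIsometric (wordDist S) intDist) (N : ℕ) :
    ∃ K : ℕ, ∀ l : ℕ, K ≤ l → ∀ g : G, ∃ x : Fin (N + 1) → G,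
      (∀ j, wordLength S (x j) = l ∧ gromov (wordDist S) 1 (x j) g ≤ 4 * δ + 1) ∧
      ∀ j k, j ≠ k → gromov (wordDist S) 1 (x j) (x k) ≤ K := by
  have hδ0 : 0 ≤ δ := by
    have h := hδ 1 1 1 1
    simp [gromov, wd_self] at h
    linarith
  induction N with
  | zero =>
    refine ⟨0, fun l _ g => ?_⟩
    obtain ⟨a, ha1, ha2⟩ := tripod hS hδ hq l
    obtain ⟨i, j, -, hi, -⟩ := tripod_good hS hδ a ha2 g
    exact ⟨fun _ => a i, fun _ => ⟨ha1 i, by linarith⟩,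
      fun j k hjk => absurd (Fin.ext (by omega)) hjk⟩
  | succ N ih =>
    obtain ⟨K, hK⟩ := ih
    set C := 4 * δ + 1 with hC
    obtain ⟨L, hL⟩ := exists_nat_gt (3 * C)
    obtain ⟨C', hC'⟩ := exists_nat_ge C
    refine ⟨K + L, fun l hl g => ?_⟩
    obtain ⟨a, ha1, ha2⟩ := tripod hS hδ hq L
    obtain ⟨i, j, hij, hi, hj⟩ := tripod_good hS hδ a ha2 g
    have key : ∀ i, gromov (wordDist S) 1 (a i) g ≤ 2 * δ + 1 + δ → ∃ x : Fin (N + 1) → G,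
        (∀ k, wordLength S (x k) = l ∧ gromov (wordDist S) 1 (x k) g ≤ C ∧
          L - C - δ ≤ gromov (wordDist S) 1 (x k) (a i)) ∧
        ∀ j k, j ≠ k → gromov (wordDist S) 1 (x j) (x k) ≤ (K + L : ℕ) := by
      intro i hi
      obtain ⟨x, hx1, hx2⟩ := hK (l - L + 2 * C') (by omega) (a i)⁻¹
      have hgp : ∀ k, gromov (wordDist S) 1 (a i * x k) (a i) =
          L - gromov (wordDist S) 1 (x k) (a i)⁻¹ := by
        intro k
        rw [gr_symm hS 1 (x k), gp_def S hS, gp_def S hS, inv_inv, wl_inv hS, ha1, mul_inv_rev,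
          ← wl_inv hS ((x k)⁻¹ * (a i)⁻¹ * a i)]
        rw [show ((x k)⁻¹ * (a i)⁻¹ * a i)⁻¹ = x k by group]
        ring
      have hlen : ∀ k, l ≤ wordLength S (a i * x k) := by
        intro k
        have h1 := (hx1 k).2
        rw [gr_symm hS, gp_def S hS, inv_inv, wl_inv hS, ha1, (hx1 k).1] at h1
        push_cast [Nat.cast_sub (show L ≤ l by omega)] at h1
        have : (l : ℝ) ≤ wordLength S (a i * x k) := by linarith
        exact_mod_cast this
      choose y hy1 hy2 hy3 using fun k => trunc hS (a i * x k) (hlen k)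
      refine ⟨y, fun k => ⟨hy1 k, ?_, ?_⟩, ?_⟩
      · refine (hy3 k g).trans ?_
        have h1 := hδ 1 (a i * x k) (a i) g
        rw [hgp] at h1
        have h2 := (hx1 k).2
        by_contra! hcon
        have h3 : C < (L : ℝ) - gromov (wordDist S) 1 (x k) (a i)⁻¹ := by linarith
        have := lt_min h3 hcon
        linarith
      · have h1 := hδ 1 (a i * x k) (y k) (a i)
        rw [hgp, hy2] at h1
        have h2 := (hx1 k).2
        have h3 : (L : ℝ) ≤ l := by exact_mod_cast (show L ≤ l by omega)
        have h4 : (L : ℝ) - C ≤ min (l : ℝ) (L - gromov (wordDist S) 1 (x k) (a i)⁻¹) := by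
          apply le_min <;> linarith
        linarith
      · intro p q hpq
        refine (hy3 p _).trans ?_
        rw [gr_symm hS]
        refine (hy3 q _).trans ?_
        have h2 := hx2 q p hpq.symm
        rw [gp_def S hS] at h2 ⊢
        rw [show (a i * x q)⁻¹ * (a i * x p) = (x q)⁻¹ * x p by group]
        have e1 : (wordLength S (a i * x q) : ℝ) ≤ L + wordLength S (x q) := by
          have := wl_mul hS (a i) (x q); rw [ha1] at this; exact_mod_cast this
        have e2 : (wordLength S (a i * x p) : ℝ) ≤ L + wordLength S (x p) := by
          have := wl_mul hS (a i) (x p); rw [ha1] at this; exact_mod_cast this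
        push_cast
        linarith
    obtain ⟨x, hx1, hx2⟩ := key i hi
    obtain ⟨y, hy1, -⟩ := key j hj
    have hcross : ∀ k, gromov (wordDist S) 1 (x k) (y 0) ≤ (K + L : ℕ) := by
      intro k
      obtain ⟨-, -, h1⟩ := hx1 k
      obtain ⟨-, -, h2⟩ := hy1 0
      have h3 := hδ 1 (y 0) (a i) (a j)
      have h4 := ha2 i j hij
      have h5 : gromov (wordDist S) 1 (y 0) (a i) ≤ 2 * δ + 1 + δ := by
        by_contra! hcon
        have : 2 * δ + 1 + δ < gromov (wordDist S) 1 (y 0) (a j) := by linarith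
        have := lt_min hcon this
        linarith
      have h6 := hδ 1 (x k) (y 0) (a i)
      have h7 : gromov (wordDist S) 1 (x k) (y 0) ≤ C := by
        by_contra! hcon
        have : C < gromov (wordDist S) 1 (x k) (a i) := by linarith
        have := lt_min hcon this
        linarith
      push_cast
      have : (0 : ℝ) ≤ K := by positivity
      linarith
    refine ⟨Fin.cons (y 0) x, ?_, ?_⟩
    · intro k
      refine Fin.cases ?_ (fun k => ?_) k
      · exact ⟨(hy1 0).1, (hy1 0).2.1⟩
      · exact ⟨(hx1 k).1, (hx1 k).2.1⟩
    · intro p q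
      refine Fin.cases ?_ (fun p => ?_) p <;> refine Fin.cases ?_ (fun q => ?_) q
      · intro h; exact absurd rfl h
      · intro _; rw [gr_symm hS]; simpa using hcross q
      · intro _; simpa using hcross p
      · intro h; simpa using hx2 p q (fun e => h (by rw [e]))

end branching

end Part2

section Part3
section spectral

open scoped Classical in
lemma geom_count {S : Finset G} (hS : Generates S) {δ : ℝ} (hδ : IsHyperbolicWith (wordDist S) δ)
    [Infinite G] (hq : ¬ QuasiIsometric (wordDist S) intDist) :
    ∃ (T : Finset G) (M : ℕ) (good : G → G → Prop),
      (∀ y, 2 * M + 1 ≤ (T.filter (fun b => good y b)).card) ∧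
      ∀ x, (T.filter (fun b => good (x * b⁻¹) b)).card ≤ M := by
  obtain ⟨V, -, hV⟩ := wl_ball hS
  set C := 4 * δ + 1 with hC
  obtain ⟨R, hR⟩ := exists_nat_ge (2 * C + 2 * δ)
  obtain ⟨B, hB, -⟩ := hV R
  obtain ⟨K, hK⟩ := branch hS hδ hq (2 * B.card)
  obtain ⟨B', hB', -⟩ := hV (K + 1)
  refine ⟨B'.filter (fun b => wordLength S b = K + 1), B.card,
    fun y b => gromov (wordDist S) 1 b y⁻¹ ≤ C, ?_, ?_⟩
  · intro y
    obtain ⟨x, hx1, hx2⟩ := hK (K + 1) (by omega) y⁻¹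
    have hinj : Function.Injective x := by
      intro j k hjk
      by_contra hne
      have := hx2 j k hne
      rw [hjk, gp_def S hS, (hx1 k).1, inv_mul_cancel, wl_one] at this
      push_cast at this
      linarith
    calc 2 * B.card + 1 = (Finset.univ.image x).card := by
          rw [Finset.card_image_of_injective _ hinj]; simp
      _ ≤ _ := by
          apply Finset.card_le_card
          intro b hb
          simp only [Finset.mem_image, Finset.mem_univ, true_and] at hb
          obtain ⟨j, rfl⟩ := hb
          simp only [Finset.mem_filter, hB']
          exact ⟨⟨(hx1 j).1.le, (hx1 j).1⟩, (hx1 j).2⟩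
  · intro x
    set T' := Finset.filter (fun b => gromov (wordDist S) 1 b (x * b⁻¹)⁻¹ ≤ C)
      (B'.filter (fun b => wordLength S b = K + 1)) with hT'
    rcases T'.eq_empty_or_nonempty with h | ⟨b0, hb0⟩
    · rw [h]; simp
    have hmem : ∀ b ∈ T', wordLength S b = K + 1 ∧
        (K + 1 : ℝ) - C ≤ gromov (wordDist S) 1 x⁻¹ b⁻¹ := by
      intro b hb
      simp only [hT', Finset.mem_filter] at hb
      refine ⟨hb.1.2, ?_⟩
      have h := hb.2
      rw [gp_def S hS, show b⁻¹ * (x * b⁻¹)⁻¹ = x⁻¹ by group, hb.1.2,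
        show (x * b⁻¹)⁻¹ = b * x⁻¹ by group] at h
      rw [gr_symm hS, gp_def S hS, wl_inv hS b, hb.1.2, inv_inv]
      push_cast at *
      linarith
    refine Finset.card_le_card_of_injOn (fun b => b * b0⁻¹) ?_ ?_
    · intro b hb
      rw [Finset.mem_coe, hB]
      obtain ⟨h1, h2⟩ := hmem b hb
      obtain ⟨h3, h4⟩ := hmem b0 hb0
      have h5 := hδ 1 x⁻¹ b⁻¹ b0⁻¹
      have h6 := le_min h2 h4
      rw [gp_def S hS b⁻¹, wl_inv hS, wl_inv hS, h1, h3, inv_inv] at h5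
      push_cast at h5
      have : (wordLength S (b * b0⁻¹) : ℝ) ≤ R := by linarith
      exact_mod_cast this
    · intro a _ b _ hab
      exact mul_right_cancel hab

/-- finite support -/
def FS (f : G → ℝ) : Prop := f.support.Finite

lemma FS.shift {f : G → ℝ} (h : FS f) (b : G) : FS (fun y => f (y * b)) := by
  have : (Function.support fun y => f (y * b)) = (fun y => y * b) ⁻¹' f.support := by
    ext; simp
  rw [FS, this]
  exact h.preimage (mul_left_injective b).injOn

lemma FS.add {f g : G → ℝ} (hf : FS f) (hg : FS g) : FS (fun y => f y + g y) :=
  (hf.union hg).subset (Function.support_add f g)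

lemma FS.sub {f g : G → ℝ} (hf : FS f) (hg : FS g) : FS (fun y => f y - g y) :=
  (hf.union hg).subset (Function.support_sub f g)

lemma FS.mul {f : G → ℝ} (hf : FS f) (g : G → ℝ) : FS (fun y => f y * g y) :=
  hf.subset (by intro x hx hfx; exact hx (by simp [hfx]))

lemma FS.mul' {f : G → ℝ} (hf : FS f) (g : G → ℝ) : FS (fun y => g y * f y) :=
  hf.subset (by intro x hx hfx; exact hx (by simp [hfx]))

lemma FS.sq {f : G → ℝ} (hf : FS f) : FS (fun y => f y ^ 2) :=
  hf.subset (by intro x hx hfx; exact hx (by simp [hfx]))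

lemma FS.abs {f : G → ℝ} (hf : FS f) : FS (fun y => |f y|) :=
  hf.subset (by intro x hx hfx; exact hx (by simp [hfx]))

lemma FS.summable {f : G → ℝ} (hf : FS f) : Summable f := summable_of_finite_support hf

lemma FS.sum {ι : Type*} (s : Finset ι) {f : ι → G → ℝ} (hf : ∀ i, FS (f i)) :
    FS (fun y => ∑ i ∈ s, f i y) := by
  refine (s.finite_toSet.biUnion (fun i _ => hf i)).subset ?_
  intro x hx
  obtain ⟨i, hi, hne⟩ := Finset.exists_ne_zero_of_sum_ne_zero hx
  exact mem_biUnion hi hne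

lemma tsum_shift (f : G → ℝ) (b : G) : ∑' y, f (y * b) = ∑' y, f y :=
  (Equiv.mulRight b).tsum_eq f

def nsq (f : G → ℝ) : ℝ := ∑' x, f x ^ 2

def dir (b : G) (f : G → ℝ) : ℝ := ∑' y, (f (y * b) - f y) ^ 2

def mop (μ : G → ℝ) (S : Finset G) (f : G → ℝ) : G → ℝ := fun x => ∑ s ∈ S, μ s * f (x * s)

def energy (μ : G → ℝ) (S : Finset G) (f : G → ℝ) : ℝ := ∑ s ∈ S, μ s * dir s f

lemma nsq_nonneg (f : G → ℝ) : 0 ≤ nsq f := tsum_nonneg fun _ => sq_nonneg _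

lemma dir_nonneg (b : G) (f : G → ℝ) : 0 ≤ dir b f := tsum_nonneg fun _ => sq_nonneg _

lemma FS.mop {f : G → ℝ} (hf : FS f) (μ : G → ℝ) (S : Finset G) : FS (mop μ S f) :=
  FS.sum S fun s => FS.mul' (hf.shift s) (fun _ => μ s)

open scoped Classical in
lemma gap0 (T : Finset G) (M : ℕ) (good : G → G → Prop)
    (h1 : ∀ y, 2 * M + 1 ≤ (T.filter (fun b => good y b)).card)
    (h2 : ∀ x, (T.filter (fun b => good (x * b⁻¹) b)).card ≤ M) (f : G → ℝ) (hf : FS f) :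
    nsq f ≤ 2 * ∑ b ∈ T, dir b f := by
  have hs1 : ∀ b, Summable (fun y => f (y * b) ^ 2) := fun b => (hf.shift b).sq.summable
  have hs2 : ∀ b, Summable (fun y => (f (y * b) - f y) ^ 2) :=
    fun b => ((hf.shift b).sub hf).sq.summable
  have hs3 : ∀ b, Summable (fun y => if good y b then f (y * b) ^ 2 else 0) := fun b =>
    Summable.of_nonneg_of_le (fun y => by split_ifs <;> positivity)
      (fun y => by split_ifs <;> first | exact le_rfl | positivity) (hs1 b)
  have hpt : ∀ y, (2 * M + 1 : ℝ) * f y ^ 2 ≤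
      ∑ b ∈ T, (2 * (if good y b then f (y * b) ^ 2 else 0) + 2 * (f (y * b) - f y) ^ 2) := by
    intro y
    calc (2 * M + 1 : ℝ) * f y ^ 2 ≤ ((T.filter (fun b => good y b)).card : ℝ) * f y ^ 2 := by
          have : ((2 * M + 1 : ℕ) : ℝ) ≤ ((T.filter (fun b => good y b)).card : ℝ) := by
            exact_mod_cast h1 y
          push_cast at this
          exact mul_le_mul_of_nonneg_right this (sq_nonneg _)
      _ = ∑ b ∈ T, if good y b then f y ^ 2 else 0 := by
          rw [← Finset.sum_filter, Finset.sum_const, nsmul_eq_mul]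
      _ ≤ _ := by
          apply Finset.sum_le_sum
          intro b _
          split_ifs
          · nlinarith [sq_nonneg (2 * f (y * b) - f y)]
          · nlinarith [sq_nonneg (f (y * b) - f y)]
  have hsum : (2 * M + 1 : ℝ) * nsq f ≤
      ∑ b ∈ T, (2 * ∑' y, (if good y b then f (y * b) ^ 2 else 0) + 2 * dir b f) := by
    rw [nsq, ← tsum_mul_left]
    refine (Summable.tsum_le_tsum hpt (hf.sq.summable.mul_left _)
      (summable_sum fun b _ => ((hs3 b).mul_left 2).add ((hs2 b).mul_left 2))).trans_eq ?_
    rw [Summable.tsum_finsetSum (fun b _ => ((hs3 b).mul_left 2).add ((hs2 b).mul_left 2))]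
    refine Finset.sum_congr rfl fun b _ => ?_
    rw [Summable.tsum_add ((hs3 b).mul_left 2) ((hs2 b).mul_left 2), tsum_mul_left, tsum_mul_left,
      dir]
  have hmult : ∑ b ∈ T, ∑' y, (if good y b then f (y * b) ^ 2 else 0) ≤ M * nsq f := by
    have e : ∀ b, ∑' y, (if good y b then f (y * b) ^ 2 else 0) =
        ∑' x, (if good (x * b⁻¹) b then f x ^ 2 else 0) := by
      intro b
      rw [← tsum_shift (fun x => if good (x * b⁻¹) b then f x ^ 2 else 0) b]
      simp
    have hs4 : ∀ b, Summable (fun x => if good (x * b⁻¹) b then f x ^ 2 else 0) := fun b =>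
      Summable.of_nonneg_of_le (fun y => by split_ifs <;> positivity)
        (fun y => by split_ifs <;> first | exact le_rfl | positivity) hf.sq.summable
    simp only [e]
    rw [← Summable.tsum_finsetSum (fun b _ => hs4 b), nsq, ← tsum_mul_left]
    refine Summable.tsum_le_tsum (fun x => ?_) (summable_sum fun b _ => hs4 b)
      (hf.sq.summable.mul_left _)
    rw [← Finset.sum_filter, Finset.sum_const, nsmul_eq_mul]
    exact mul_le_mul_of_nonneg_right (by exact_mod_cast h2 x) (sq_nonneg _)
  rw [Finset.sum_add_distrib, ← Finset.mul_sum, ← Finset.mul_sum] at hsum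
  linarith

lemma dir_mul (b c : G) (f : G → ℝ) (hf : FS f) : dir (b * c) f ≤ 2 * dir b f + 2 * dir c f := by
  have hs2 : ∀ b, Summable (fun y => (f (y * b) - f y) ^ 2) :=
    fun b => ((hf.shift b).sub hf).sq.summable
  have e : dir c f = ∑' y, (f (y * b * c) - f (y * b)) ^ 2 :=
    (tsum_shift (fun y => (f (y * c) - f y) ^ 2) b).symm
  have hs3 : Summable (fun y => (f (y * b * c) - f (y * b)) ^ 2) :=
    (((hf.shift c).shift b).sub (hf.shift b)).sq.summable
  rw [e, dir, dir, ← tsum_mul_left, ← tsum_mul_left,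
    ← Summable.tsum_add ((hs2 b).mul_left 2) (hs3.mul_left 2)]
  refine Summable.tsum_le_tsum (fun y => ?_) (hs2 _) (((hs2 b).mul_left 2).add (hs3.mul_left 2))
  rw [← mul_assoc]
  nlinarith [sq_nonneg ((f (y * b) - f y) - (f (y * b * c) - f (y * b)))]

lemma dir_inv (b : G) (f : G → ℝ) : dir b⁻¹ f = dir b f := by
  rw [dir, dir, ← tsum_shift _ b]
  refine tsum_congr fun y => ?_
  simp only [mul_inv_cancel_right]
  ring

lemma dir_one (f : G → ℝ) : dir 1 f = 0 := by simp [dir]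

lemma energy_nonneg {μ : G → ℝ} (h0 : ∀ g, 0 ≤ μ g) (S : Finset G) (f : G → ℝ) :
    0 ≤ energy μ S f := Finset.sum_nonneg fun s _ => mul_nonneg (h0 s) (dir_nonneg _ _)

lemma dir_le_energy {μ : G → ℝ} (h0 : ∀ g, 0 ≤ μ g) {S : Finset G} (hS : Generates S)
    (hpos : ∀ s ∈ S, 0 < μ s) (b : G) : ∃ K : ℝ, 0 ≤ K ∧ ∀ f, FS f → dir b f ≤ K * energy μ S f := by
  have hb : b ∈ Subgroup.closure (S : Set G) := by
    rw [show Subgroup.closure (S : Set G) = ⊤ from hS]; trivial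
  induction hb using Subgroup.closure_induction with
  | mem s hs =>
    refine ⟨(μ s)⁻¹, (inv_pos.2 (hpos s hs)).le, fun f _ => ?_⟩
    rw [le_inv_mul_iff₀ (hpos s hs)]
    exact Finset.single_le_sum (f := fun s => μ s * dir s f)
      (fun s _ => mul_nonneg (h0 s) (dir_nonneg _ _)) hs
  | one => exact ⟨0, le_rfl, fun f _ => by simp [dir_one]⟩
  | mul b c _ _ hb hc =>
    obtain ⟨K, hK, hb⟩ := hb
    obtain ⟨K', hK', hc⟩ := hc
    refine ⟨2 * K + 2 * K', by positivity, fun f hf => ?_⟩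
    have := dir_mul b c f hf
    have := hb f hf
    have := hc f hf
    linarith
  | inv b _ hb =>
    obtain ⟨K, hK, hb⟩ := hb
    exact ⟨K, hK, fun f hf => by rw [dir_inv]; exact hb f hf⟩

def ip (f g : G → ℝ) : ℝ := ∑' x, f x * g x

lemma ip_mop (μ : G → ℝ) (S : Finset G) {f : G → ℝ} (hf : FS f) (g : G → ℝ) :
    ip (mop μ S f) g = ∑ s ∈ S, μ s * ∑' x, f (x * s) * g x := by
  rw [ip]
  simp only [mop, Finset.sum_mul]
  have hs : ∀ s, Summable (fun x => μ s * (f (x * s) * g x)) := fun s =>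
    ((hf.shift s).mul g).summable.mul_left _
  simp only [mul_assoc]
  rw [Summable.tsum_finsetSum (fun s _ => hs s)]
  refine Finset.sum_congr rfl fun s _ => ?_
  rw [tsum_mul_left]

lemma energy_eq {μ : G → ℝ} {S : Finset G} (h1 : ∑ s ∈ S, μ s = 1) (f : G → ℝ) (hf : FS f) :
    energy μ S f = 2 * nsq f - 2 * ip (mop μ S f) f := by
  have hd : ∀ s, dir s f = 2 * nsq f - 2 * ∑' x, f (x * s) * f x := by
    intro s
    have a1 : Summable (fun x => f (x * s) ^ 2) := (hf.shift s).sq.summable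
    have a2 : Summable (fun x => f x ^ 2) := hf.sq.summable
    have a3 : Summable (fun x => f (x * s) * f x) := (hf.mul' _).summable
    have e : nsq f = ∑' x, f (x * s) ^ 2 := (tsum_shift (fun x => f x ^ 2) s).symm
    calc dir s f = ∑' x, ((f (x * s) ^ 2 + f x ^ 2) - 2 * (f (x * s) * f x)) := by
          rw [dir]; exact tsum_congr fun x => by ring
      _ = _ := by
          rw [Summable.tsum_sub (a1.add a2) (a3.mul_left 2), Summable.tsum_add a1 a2, ← e,
            tsum_mul_left, ← nsq]; ring
  rw [energy, ip_mop μ S hf]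
  simp only [hd, mul_sub, Finset.sum_sub_distrib]
  rw [← Finset.sum_mul, h1, one_mul, Finset.mul_sum]
  congr 1
  exact Finset.sum_congr rfl fun s _ => by ring

lemma gap {μ : G → ℝ} (h0 : ∀ g, 0 ≤ μ g) {S : Finset G} (hS : Generates S)
    (hpos : ∀ s ∈ S, 0 < μ s) (h1 : ∑ s ∈ S, μ s = 1)
    {δ : ℝ} (hδ : IsHyperbolicWith (wordDist S) δ)
    [Infinite G] (hq : ¬ QuasiIsometric (wordDist S) intDist) :
    ∃ θ : ℝ, 0 < θ ∧ θ < 1 ∧ ∀ f, FS f → |ip (mop μ S f) f| ≤ θ * nsq f := by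
  obtain ⟨T, M, good, g1, g2⟩ := geom_count hS hδ hq
  choose K hK0 hK using dir_le_energy h0 hS hpos
  set A := 2 * ∑ b ∈ T, K b with hA
  have hA0 : 0 ≤ A := by
    have := Finset.sum_nonneg (s := T) (fun b _ => hK0 b); linarith
  have hE : ∀ f, FS f → nsq f ≤ (A + 1) * energy μ S f := by
    intro f hf
    have a1 := gap0 T M good g1 g2 f hf
    have a2 : ∑ b ∈ T, dir b f ≤ ∑ b ∈ T, K b * energy μ S f :=
      Finset.sum_le_sum fun b _ => hK b f hf
    rw [← Finset.sum_mul] at a2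
    have := energy_nonneg h0 S f
    nlinarith
  have hup : ∀ f, FS f → ip (mop μ S f) f ≤ (1 - 1 / (2 * (A + 1))) * nsq f := by
    intro f hf
    have a1 := hE f hf
    rw [energy_eq h1 f hf] at a1
    have : (1 / (2 * (A + 1))) * nsq f ≤ nsq f - ip (mop μ S f) f := by
      rw [one_div, inv_mul_le_iff₀ (by positivity)]
      linarith
    linarith
  have hlt : 1 / (2 * (A + 1)) ≤ 1 / 2 := by
    apply one_div_le_one_div_of_le <;> linarith
  refine ⟨1 - 1 / (2 * (A + 1)), by linarith, by
    have : 0 < 1 / (2 * (A + 1)) := by positivity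
    linarith, ?_⟩
  intro f hf
  rw [abs_le]
  refine ⟨?_, hup f hf⟩
  have h2 := hup _ hf.abs
  have h3 : nsq (fun y => |f y|) = nsq f := by simp [nsq]
  have h4 : - ip (mop μ S f) f ≤ ip (mop μ S fun y => |f y|) (fun y => |f y|) := by
    rw [ip, ip, ← tsum_neg]
    refine Summable.tsum_le_tsum (fun x => ?_) (hf.mul' _).summable.neg (hf.abs.mul' _).summable
    rw [← neg_mul]
    refine (le_abs_self _).trans ?_
    rw [abs_mul, abs_neg]
    refine mul_le_mul_of_nonneg_right ?_ (abs_nonneg _)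
    refine (Finset.abs_sum_le_sum_abs _ _).trans (Finset.sum_le_sum fun s _ => ?_)
    rw [abs_mul, abs_of_nonneg (h0 s)]
  rw [h3] at h2
  linarith

lemma mop_symm {μ : G → ℝ} (hsym : IsSymmetric μ) {S : Finset G} (hSi : ∀ s, s ∈ S ↔ s⁻¹ ∈ S)
    {f g : G → ℝ} (hf : FS f) (hg : FS g) : ip (mop μ S f) g = ip (mop μ S g) f := by
  rw [ip_mop μ S hf, ip_mop μ S hg]
  refine Finset.sum_equiv (Equiv.inv G) (fun s => hSi s) (fun s _ => ?_)
  rw [Equiv.inv_apply, hsym s, ← tsum_shift (fun x => g (x * s⁻¹) * f x) s]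
  congr 1
  refine tsum_congr fun x => ?_
  simp [mul_comm]

/-- convolution powers as a real function -/
def uu (μ : G → ℝ) (S : Finset G) : ℕ → G → ℝ
  | 0 => Set.indicator {1} (fun _ => 1)
  | n + 1 => mop μ S (uu μ S n)

lemma uu_FS (μ : G → ℝ) (S : Finset G) (n : ℕ) : FS (uu μ S n) := by
  induction n with
  | zero => exact (Set.finite_singleton (1 : G)).subset Set.support_indicator_subset
  | succ n ih => exact ih.mop μ S

lemma decay {μ : G → ℝ} (h0 : ∀ g, 0 ≤ μ g) (hsym : IsSymmetric μ) {S : Finset G}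
    (hS : Generates S) (hSi : ∀ s, s ∈ S ↔ s⁻¹ ∈ S)
    (hpos : ∀ s ∈ S, 0 < μ s) (h1 : ∑ s ∈ S, μ s = 1)
    {δ : ℝ} (hδ : IsHyperbolicWith (wordDist S) δ)
    [Infinite G] (hq : ¬ QuasiIsometric (wordDist S) intDist) :
    ∃ ρ : ℝ, 0 < ρ ∧ ρ < 1 ∧ ∀ n g, uu μ S n g ≤ ρ ^ n := by
  obtain ⟨θ, hθ0, hθ1, hθ⟩ := gap h0 hS hpos h1 hδ hq
  have hpol : ∀ f g, FS f → FS g → ip (mop μ S f) g ≤ θ / 2 * (nsq f + nsq g) := by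
    intro f g hf hg
    have a1 := (abs_le.1 (hθ _ (hf.add hg))).2
    have a2 := (abs_le.1 (hθ _ (hf.sub hg))).1
    have e0 := mop_symm hsym hSi hf hg
    have b1 : ip (mop μ S fun y => f y + g y) (fun y => f y + g y) =
        ip (mop μ S f) f + 2 * ip (mop μ S f) g + ip (mop μ S g) g := by
      have c1 : Summable (fun x => mop μ S f x * f x) := (hf.mul' _).summable
      have c2 : Summable (fun x => mop μ S f x * g x) := (hg.mul' _).summable
      have c3 : Summable (fun x => mop μ S g x * f x) := (hf.mul' _).summable
      have c4 : Summable (fun x => mop μ S g x * g x) := (hg.mul' _).summable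
      have : ip (mop μ S fun y => f y + g y) (fun y => f y + g y) =
        ∑' x, ((mop μ S f x * f x + mop μ S f x * g x) + (mop μ S g x * f x + mop μ S g x * g x)) := by
        rw [ip]; refine tsum_congr fun x => ?_
        simp only [mop, mul_add, Finset.sum_add_distrib]; ring
      rw [this, Summable.tsum_add (c1.add c2) (c3.add c4), Summable.tsum_add c1 c2,
        Summable.tsum_add c3 c4]
      simp only [ip] at e0 ⊢
      linarith
    have b2 : ip (mop μ S fun y => f y - g y) (fun y => f y - g y) =
        ip (mop μ S f) f - 2 * ip (mop μ S f) g + ip (mop μ S g) g := by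
      have c1 : Summable (fun x => mop μ S f x * f x) := (hf.mul' _).summable
      have c2 : Summable (fun x => mop μ S f x * g x) := (hg.mul' _).summable
      have c3 : Summable (fun x => mop μ S g x * f x) := (hf.mul' _).summable
      have c4 : Summable (fun x => mop μ S g x * g x) := (hg.mul' _).summable
      have : ip (mop μ S fun y => f y - g y) (fun y => f y - g y) =
        ∑' x, ((mop μ S f x * f x - mop μ S f x * g x) - (mop μ S g x * f x - mop μ S g x * g x)) := by
        rw [ip]; refine tsum_congr fun x => ?_
        simp only [mop, mul_sub, Finset.sum_sub_distrib]; ring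
      rw [this, Summable.tsum_sub (c1.sub c2) (c3.sub c4), Summable.tsum_sub c1 c2,
        Summable.tsum_sub c3 c4]
      simp only [ip] at e0 ⊢
      linarith
    have b3 : nsq (fun y => f y + g y) + nsq (fun y => f y - g y) = 2 * nsq f + 2 * nsq g := by
      rw [nsq, nsq, ← Summable.tsum_add (hf.add hg).sq.summable (hf.sub hg).sq.summable, nsq, nsq,
        ← tsum_mul_left, ← tsum_mul_left,
        ← Summable.tsum_add (hf.sq.summable.mul_left 2) (hg.sq.summable.mul_left 2)]
      exact tsum_congr fun x => by ring
    rw [b1] at a1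
    rw [b2] at a2
    nlinarith
  have hn : ∀ n, nsq (uu μ S n) ≤ θ ^ n := by
    intro n
    induction n with
    | zero =>
      have : (fun x : G => (uu μ S 0 x) ^ 2) = Set.indicator {1} (fun _ => (1 : ℝ)) := by
        ext x
        by_cases hx : x = 1 <;> simp [uu, hx]
      rw [nsq, this, tsum_eq_single 1 (by intro b hb; simp [hb])]
      simp
    | succ n ih =>
      have a := hpol (uu μ S n) (uu μ S (n + 1)) (uu_FS μ S n) (uu_FS μ S (n + 1))
      have e : ip (mop μ S (uu μ S n)) (uu μ S (n + 1)) = nsq (uu μ S (n + 1)) := by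
        rw [ip, nsq]; exact tsum_congr fun x => by rw [uu]; ring
      rw [e] at a
      have p1 := nsq_nonneg (uu μ S n)
      have p2 := nsq_nonneg (uu μ S (n + 1))
      have : nsq (uu μ S (n + 1)) ≤ θ * nsq (uu μ S n) := by
        by_contra! hcon
        nlinarith [mul_pos hθ0 hθ0]
      rw [pow_succ]
      nlinarith
  refine ⟨√θ, Real.sqrt_pos.2 hθ0, by rw [Real.sqrt_lt' one_pos]; simpa using hθ1, fun n g => ?_⟩
  have h2 : uu μ S n g ^ 2 ≤ θ ^ n :=
    ((uu_FS μ S n).sq.summable.le_tsum g (fun _ _ => sq_nonneg _)).trans (hn n)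
  have h3 : θ ^ n = (√θ ^ n) ^ 2 := by
    rw [← pow_mul, mul_comm n 2, pow_mul, Real.sq_sqrt hθ0.le]
  rw [h3] at h2
  exact le_of_sq_le_sq h2 (by positivity)

end spectral

end Part3

section Part4
section Kern
variable {X : Type*}
open scoped Classical in
def ch (A : Set X) (x : X) : ℝ≥0∞ := if x ∈ A then 1 else 0

open scoped Classical in
def dl (x y : X) : ℝ≥0∞ := if x = y then 1 else 0

def qk (p : X → X → ℝ≥0∞) (A : Set X) : ℕ → X → X → ℝ≥0∞
  | 0 => dl
  | n + 1 => fun x y => ch A x * ∑' z, p x z * qk p A n z y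

def Hk (p : X → X → ℝ≥0∞) (A : Set X) (x y : X) : ℝ≥0∞ := ∑' n, qk p A n x y

lemma ch_mem {A : Set X} {x : X} (h : x ∈ A) : ch A x = 1 := by simp [ch, h]
lemma ch_not {A : Set X} {x : X} (h : x ∉ A) : ch A x = 0 := by simp [ch, h]
lemma ch_le (A : Set X) (x : X) : ch A x ≤ 1 := by
  by_cases h : x ∈ A <;> simp [ch, h]

lemma tsum_dl_left (x : X) (f : X → ℝ≥0∞) : ∑' z, dl x z * f z = f x := by
  rw [tsum_eq_single x]
  · simp [dl]
  · intro b hb; simp [dl, hb.symm]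

lemma tsum_dl_right (y : X) (f : X → ℝ≥0∞) : ∑' z, f z * dl z y = f y := by
  rw [tsum_eq_single y]
  · simp [dl]
  · intro b hb; simp [dl, hb]

lemma qk_mono (p : X → X → ℝ≥0∞) {A C : Set X} (h : A ⊆ C) (n : ℕ) (x y : X) :
    qk p A n x y ≤ qk p C n x y := by
  induction n generalizing x with
  | zero => exact le_rfl
  | succ n ih =>
    simp only [qk]
    refine mul_le_mul' ?_ (ENNReal.tsum_le_tsum fun z => mul_le_mul' le_rfl (ih z))
    by_cases hx : x ∈ A
    · rw [ch_mem hx, ch_mem (h hx)]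
    · rw [ch_not hx]; exact zero_le

lemma Hk_mono (p : X → X → ℝ≥0∞) {A C : Set X} (h : A ⊆ C) (x y : X) :
    Hk p A x y ≤ Hk p C x y := ENNReal.tsum_le_tsum fun n => qk_mono p h n x y

lemma qk_right (p : X → X → ℝ≥0∞) (A : Set X) (n : ℕ) (x y : X) :
    qk p A (n + 1) x y = ∑' z, qk p A n x z * (ch A z * p z y) := by
  induction n generalizing x with
  | zero =>
    rw [qk]; simp only [qk]
    rw [tsum_dl_left, tsum_dl_right]
  | succ n ih =>
    rw [qk]
    simp only [ih]
    simp only [qk, ← ENNReal.tsum_mul_left, ← ENNReal.tsum_mul_right]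
    rw [ENNReal.tsum_comm]
    simp only [mul_assoc]

lemma qk_symm {p : X → X → ℝ≥0∞} (hp : ∀ x y, p x y = p y x) (A : Set X) (n : ℕ) (x y : X) :
    qk p A n x y * ch A y = qk p A n y x * ch A x := by
  induction n generalizing x with
  | zero =>
    by_cases h : x = y
    · subst h; rfl
    · simp [qk, dl, h, Ne.symm h]
  | succ n ih =>
    rw [qk_right _ _ _ y x]
    simp only [qk]
    rw [mul_assoc, ← ENNReal.tsum_mul_right, mul_comm]
    congr 1
    refine tsum_congr fun z => ?_
    rw [mul_assoc, ih, hp x z]; ring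

lemma Hk_symm {p : X → X → ℝ≥0∞} (hp : ∀ x y, p x y = p y x) {A : Set X} {x y : X}
    (hx : x ∈ A) (hy : y ∈ A) : Hk p A x y = Hk p A y x := by
  refine tsum_congr fun n => ?_
  simpa [ch_mem hx, ch_mem hy] using qk_symm hp A n x y

lemma Hk_not (p : X → X → ℝ≥0∞) {A : Set X} {x : X} (hx : x ∉ A) (y : X) :
    Hk p A x y = dl x y := by
  rw [Hk, tsum_eq_single 0]
  · rfl
  · intro n hn
    obtain ⟨k, rfl⟩ := Nat.exists_eq_succ_of_ne_zero hn
    simp [qk, ch_not hx]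

lemma Hk_self (p : X → X → ℝ≥0∞) (A : Set X) (x : X) : 1 ≤ Hk p A x x :=
  le_trans (by simp [qk, dl]) (ENNReal.le_tsum 0)

lemma Hk_right (p : X → X → ℝ≥0∞) {A : Set X} (x : X) {z : X} (hz : z ∈ A) (y : X) :
    Hk p A x z * p z y ≤ Hk p A x y := by
  rw [Hk, ← ENNReal.tsum_mul_right]
  calc ∑' n, qk p A n x z * p z y ≤ ∑' n, qk p A (n+1) x y := by
        refine ENNReal.tsum_le_tsum fun n => ?_
        rw [qk_right]
        refine le_trans ?_ (ENNReal.le_tsum z)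
        rw [ch_mem hz, one_mul]
    _ ≤ _ := ENNReal.tsum_comp_le_tsum_of_injective (add_left_injective 1) (fun n => qk p A n x y)

lemma Hk_exit {p : X → X → ℝ≥0∞} (hp : ∀ x, ∑' z, p x z ≤ 1) (A : Set X) (x : X) :
    ∑' v, ch Aᶜ v * Hk p A x v ≤ 1 := by
  have key : ∀ N x, ∑ i ∈ Finset.range N, ∑' v, ch Aᶜ v * qk p A i x v ≤ 1 := by
    intro N
    induction N with
    | zero => simp
    | succ N ih =>
      intro x
      rw [Finset.sum_range_succ']
      have h0 : ∑' v, ch Aᶜ v * qk p A 0 x v = ch Aᶜ x := by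
        simp only [qk]; simp_rw [mul_comm (ch Aᶜ _)]; exact tsum_dl_left x (ch Aᶜ)
      rw [h0]
      by_cases hx : x ∈ A
      · have : ch Aᶜ x = 0 := ch_not (by simpa using hx)
        rw [this, add_zero]
        simp only [qk, ch_mem hx, one_mul]
        have : ∀ i, ∑' v, ch Aᶜ v * ∑' z, p x z * qk p A i z v
            = ∑' z, p x z * ∑' v, ch Aᶜ v * qk p A i z v := by
          intro i
          simp only [← ENNReal.tsum_mul_left]
          rw [ENNReal.tsum_comm]
          refine tsum_congr fun z => tsum_congr fun v => by ring
        simp only [this]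
        rw [← Summable.tsum_finsetSum (fun _ _ => ENNReal.summable)]
        calc _ ≤ ∑' z, p x z := ENNReal.tsum_le_tsum fun z => by
                rw [← Finset.mul_sum]
                exact mul_le_of_le_one_right' (ih z)
          _ ≤ 1 := hp x
      · simp only [qk, ch_not hx, zero_mul, mul_zero, tsum_zero, Finset.sum_const_zero, zero_add]
        exact ch_le _ _
  have : ∑' v, ch Aᶜ v * Hk p A x v = ∑' n, ∑' v, ch Aᶜ v * qk p A n x v := by
    simp only [Hk, ← ENNReal.tsum_mul_left]
    rw [ENNReal.tsum_comm]
  rw [this]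
  exact ENNReal.tsum_le_of_sum_range_le fun n => key n x

lemma ennreal_cauchy (f g : ℕ → ℝ≥0∞) :
    ∑' n, ∑ ij ∈ Finset.HasAntidiagonal.antidiagonal n, f ij.1 * g ij.2 = (∑' i, f i) * ∑' j, g j := by
  rw [← ENNReal.tsum_mul_right]
  simp only [← ENNReal.tsum_mul_left]
  have h1 := ENNReal.tsum_prod (f := fun i j => f i * g j)
  rw [← h1, ← (Finset.HasAntidiagonal.sigmaAntidiagonalEquivProd (A := ℕ)).tsum_eq, ENNReal.tsum_sigma']
  refine tsum_congr fun n => ?_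
  rw [tsum_fintype, ← Finset.sum_coe_sort]
  rfl

lemma qk_LM (p : X → X → ℝ≥0∞) {A C : Set X} (h : A ⊆ C) (n : ℕ) (x t : X) :
    qk p C n x t = ∑' v, ch Aᶜ v * (∑ ij ∈ Finset.HasAntidiagonal.antidiagonal n, qk p A ij.1 x v * qk p C ij.2 v t)
      + qk p A n x t * ch A t := by
  induction n generalizing x with
  | zero =>
    simp only [Finset.Nat.antidiagonal_zero, Finset.sum_singleton, qk]
    have : ∀ v, ch Aᶜ v * (dl x v * dl v t) = dl x v * (ch Aᶜ v * dl v t) := fun v => by ring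
    simp only [this, tsum_dl_left]
    by_cases hxt : x = t
    · subst hxt
      by_cases hx : x ∈ A <;> simp [ch, dl, hx]
    · simp [dl, hxt]
  | succ n ih =>
    by_cases hx : x ∈ A
    · simp only [Finset.Nat.sum_antidiagonal_succ]
      have e0 : ∀ v, ch Aᶜ v * (qk p A 0 x v * qk p C (n+1) v t) = 0 := by
        intro v
        by_cases hv : x = v
        · subst hv; rw [ch_not (by simpa using hx)]; simp
        · simp [qk, dl, hv]
      simp only [mul_add, e0, zero_add]
      rw [show qk p C (n+1) x t = ∑' z, p x z * qk p C n z t by simp [qk, ch_mem (h hx)]]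
      have e1 : ∀ i v, qk p A (i+1) x v = ∑' z, p x z * qk p A i z v := by
        intro i v; simp [qk, ch_mem hx]
      simp only [e1]
      simp only [ih, mul_add]
      rw [ENNReal.tsum_add]
      congr 1
      · simp only [← ENNReal.tsum_mul_left, ← ENNReal.tsum_mul_right]
        have e2 : ∀ v, ∑ ij ∈ Finset.HasAntidiagonal.antidiagonal n, ∑' z, p x z * qk p A ij.1 z v * qk p C ij.2 v t
          = ∑' z, p x z * ∑ ij ∈ Finset.HasAntidiagonal.antidiagonal n, qk p A ij.1 z v * qk p C ij.2 v t := by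
          intro v
          rw [← Summable.tsum_finsetSum (fun _ _ => ENNReal.summable)]
          refine tsum_congr fun z => ?_
          rw [Finset.mul_sum]
          exact Finset.sum_congr rfl fun _ _ => by ring
        simp only [e2, ← ENNReal.tsum_mul_left]
        rw [ENNReal.tsum_comm]
        refine tsum_congr fun z => tsum_congr fun v => by ring
      · rw [← ENNReal.tsum_mul_right]
        refine tsum_congr fun z => by ring
    · simp only [Finset.Nat.sum_antidiagonal_succ]
      have e1 : ∀ i v, qk p A (i+1) x v = 0 := by
        intro i v; simp [qk, ch_not hx]
      simp only [e1, zero_mul, Finset.sum_const_zero, add_zero]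
      have : ∀ v, ch Aᶜ v * (qk p A 0 x v * qk p C (n+1) v t)
        = dl x v * (ch Aᶜ v * qk p C (n+1) v t) := fun v => by simp only [qk]; ring
      simp only [this, tsum_dl_left]
      rw [ch_mem (show x ∈ Aᶜ from hx), one_mul]

lemma Hk_LM (p : X → X → ℝ≥0∞) {A C : Set X} (h : A ⊆ C) (x t : X) :
    Hk p C x t = ∑' v, ch Aᶜ v * (Hk p A x v * Hk p C v t) + Hk p A x t * ch A t := by
  have e : Hk p C x t = _ := tsum_congr fun n => qk_LM p h n x t
  rw [e, ENNReal.tsum_add, ENNReal.tsum_mul_right]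
  congr 1
  rw [ENNReal.tsum_comm]
  refine tsum_congr fun v => ?_
  rw [ENNReal.tsum_mul_left, ennreal_cauchy (fun i => qk p A i x v) (fun j => qk p C j v t)]
  rfl

lemma Hk_point (p : X → X → ℝ≥0∞) (x y : X) :
    Hk p univ x y = Hk p {y}ᶜ x y * Hk p univ y y := by
  rw [Hk_LM p (subset_univ {y}ᶜ) x y, ch_not (by simp), mul_zero, add_zero,
    tsum_eq_single y]
  · simp [ch]
  · intro b hb; simp [ch, hb]

lemma Hk_point_le {p : X → X → ℝ≥0∞} (hp : ∀ x, ∑' z, p x z ≤ 1) (x y : X) :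
    Hk p {y}ᶜ x y ≤ 1 := by
  refine le_trans ?_ (Hk_exit hp {y}ᶜ x)
  refine le_trans ?_ (ENNReal.le_tsum y)
  simp [ch]

lemma qk_pos_path {p : X → X → ℝ≥0∞} {A : Set X} {n : ℕ} {x y : X} (h : qk p A n x y ≠ 0) :
    ∃ c : ℕ → X, c 0 = x ∧ c n = y ∧ ∀ i < n, c i ∈ A ∧ p (c i) (c (i+1)) ≠ 0 := by
  induction n generalizing x with
  | zero =>
    refine ⟨fun _ => x, rfl, ?_, by simp⟩
    by_contra hne
    exact h (by simp only [qk, dl]; rw [if_neg hne])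
  | succ n ih =>
    simp only [qk] at h
    have hx : x ∈ A := by
      by_contra hx; exact h (by rw [ch_not hx, zero_mul])
    rw [ch_mem hx, one_mul] at h
    obtain ⟨z, hz⟩ : ∃ z, p x z * qk p A n z y ≠ 0 := by
      by_contra hc; push Not at hc; exact h (by simp [hc])
    obtain ⟨c, c0, cn, hc⟩ := ih (right_ne_zero_of_mul hz)
    refine ⟨fun i => Nat.casesOn i x c, rfl, cn, ?_⟩
    rintro (_|i) hi
    · exact ⟨hx, by simpa [c0] using left_ne_zero_of_mul hz⟩
    · exact hc i (by omega)

end Kern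

end Part4

section Part5
set_option linter.unusedSectionVars false
lemma tsum_list {α : Type*} (φ : List α → ℝ≥0∞) :
    ∑' l, φ l = φ [] + ∑' a, ∑' l, φ (a :: l) := by
  classical
  rw [ENNReal.tsum_eq_add_tsum_ite []]
  congr 1
  have h1 := ENNReal.tsum_prod (f := fun (a : α) (l : List α) => φ (a :: l))
  rw [← h1]
  have hinj : Function.Injective (fun p : α × List α => p.1 :: p.2) := by
    rintro ⟨a, l⟩ ⟨b, k⟩ h; simpa using h
  rw [← hinj.tsum_eq]
  · simp
  · intro l hl
    cases l with
    | nil => simp at hl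
    | cons a l => exact ⟨(a, l), rfl⟩

def pk (μ : G → ℝ) (x y : G) : ℝ≥0∞ := ENNReal.ofReal (μ (x⁻¹ * y))

def okp (A : Set G) : G → G → List G → Prop
  | x, y, [] => x = y
  | x, y, a :: l => x ∈ A ∧ okp A (x * a) y l

lemma tsum_pk (μ : G → ℝ) (x : G) (f : G → ℝ≥0∞) :
    ∑' z, pk μ x z * f z = ∑' s, ENNReal.ofReal (μ s) * f (x * s) := by
  rw [← (Equiv.mulLeft x).tsum_eq]
  simp [pk]

open scoped Classical in
lemma qk_list (μ : G → ℝ) (A : Set G) (n : ℕ) (x y : G) :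
    qk (pk μ) A n x y = ∑' l : List G, if l.length = n ∧ okp A x y l then
      (l.map fun s => ENNReal.ofReal (μ s)).prod else 0 := by
  induction n generalizing x with
  | zero =>
    rw [tsum_list]
    simp [qk, dl, okp]
  | succ n ih =>
    rw [tsum_list]
    simp only [qk]
    rw [tsum_pk]
    simp only [ih]
    by_cases hx : x ∈ A
    · simp [ch, okp, hx, ← ENNReal.tsum_mul_left, mul_ite]
    · simp [ch, okp, hx]

open scoped Classical in
lemma Hk_list (μ : G → ℝ) (A : Set G) (x y : G) :
    Hk (pk μ) A x y = ∑' l : List G, if okp A x y l then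
      (l.map fun s => ENNReal.ofReal (μ s)).prod else 0 := by
  rw [Hk]
  simp only [qk_list]
  rw [ENNReal.tsum_comm]
  refine tsum_congr fun l => ?_
  rw [tsum_eq_single l.length]
  · simp
  · intro n hn; simp [hn.symm]

lemma Hk_list' (μ : G → ℝ) (A : Set G) (x y : G) :
    Hk (pk μ) A x y = ∑' l : {l : List G // okp A x y l},
      ((l : List G).map fun s => ENNReal.ofReal (μ s)).prod := by
  classical
  rw [Hk_list]
  have := tsum_subtype {l : List G | okp A x y l} (fun l => (l.map fun s => ENNReal.ofReal (μ s)).prod)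
  refine Eq.trans ?_ this.symm
  refine tsum_congr fun l => ?_
  simp [Set.indicator]

lemma isFirstHit_iff (x y : G) (l : List G) : IsFirstHitPath x y l ↔ okp {y}ᶜ x y l := by
  induction l generalizing x with
  | nil => simp [IsFirstHitPath, walkPositions, okp]
  | cons a l ih =>
    rw [okp, ← ih]
    have h1 : walkPositions x (a :: l) = x :: walkPositions (x * a) l := by
      simp [walkPositions]
    have h2 : walkPositions (x * a) l ≠ [] := by
      cases l <;> simp [walkPositions]
    simp only [IsFirstHitPath, h1]
    rw [List.dropLast_cons_of_ne_nil h2]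
    obtain ⟨b, L, hL⟩ := List.exists_cons_of_ne_nil h2
    rw [hL, List.getLast?_cons_cons]
    simp only [List.mem_cons, not_or, Set.mem_compl_iff, Set.mem_singleton_iff]
    constructor
    · rintro ⟨a1, a2, a3⟩; exact ⟨fun h => a2 h.symm, a1, a3⟩
    · rintro ⟨a2, a1, a3⟩; exact ⟨a1, fun h => a2 h.symm, a3⟩

lemma prod_ofReal {μ : G → ℝ} (h0 : ∀ g, 0 ≤ μ g) (l : List G) :
    (l.map fun s => ENNReal.ofReal (μ s)).prod = ENNReal.ofReal (l.map μ).prod ∧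
      0 ≤ (l.map μ).prod := by
  induction l with
  | nil => simp
  | cons a l ih =>
    simp only [List.map_cons, List.prod_cons]
    exact ⟨by rw [ENNReal.ofReal_mul (h0 a), ih.1], mul_nonneg (h0 a) ih.2⟩

lemma hitProb_eq {μ : G → ℝ} (h0 : ∀ g, 0 ≤ μ g) (x y : G) :
    hitProb μ x y = (Hk (pk μ) {y}ᶜ x y).toReal := by
  have e : {l : List G | IsFirstHitPath x y l} = {l | okp {y}ᶜ x y l} := by
    ext l; exact isFirstHit_iff x y l
  have : hitProb μ x y = ∑' l : {l : List G | IsFirstHitPath x y l}, ((l : List G).map μ).prod := rfl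
  rw [this, e, Hk_list', ENNReal.tsum_toReal_eq]
  · refine tsum_congr fun l => ?_
    rw [(prod_ofReal h0 _).1, ENNReal.toReal_ofReal (prod_ofReal h0 _).2]
  · intro l
    rw [(prod_ofReal h0 _).1]; exact ENNReal.ofReal_ne_top

lemma okp_iff (A : Set G) (x y : G) (l : List G) :
    okp A x y l ↔ (∀ k < l.length, x * (l.take k).prod ∈ A) ∧ x * l.prod = y := by
  induction l generalizing x with
  | nil => simp [okp]
  | cons a l ih =>
    rw [okp, ih]
    constructor
    · rintro ⟨h1, h2, h3⟩
      refine ⟨?_, by simpa [mul_assoc] using h3⟩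
      rintro (_|k) hk
      · simpa using h1
      · simpa [mul_assoc] using h2 k (by simpa using hk)
    · rintro ⟨h2, h3⟩
      refine ⟨by simpa using h2 0 (by simp), ?_, by simpa [mul_assoc] using h3⟩
      intro k hk
      simpa [mul_assoc] using h2 (k+1) (by simpa using hk)

lemma okp_walk (A : Set G) (y : G) (n : ℕ) (ω : ℕ → G) :
    okp A 1 y ((List.range n).map ω) ↔ (∀ k < n, walkPos k ω ∈ A) ∧ walkPos n ω = y := by
  rw [okp_iff]
  simp only [one_mul, List.length_map, List.length_range, walkPos]
  refine and_congr_left fun _ => forall_congr' fun k => forall_congr' fun hk => ?_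
  rw [← List.map_take, List.take_range, min_eq_left hk.le]

def cyl (l : List G) : Set (ℕ → G) := {ω | ∀ i : Fin l.length, ω i = l.get i}

lemma mem_cyl (l : List G) (ω : ℕ → G) : ω ∈ cyl l ↔ l = (List.range l.length).map ω := by
  constructor
  · intro h
    refine List.ext_get (by simp) fun n h1 h2 => ?_
    have := h ⟨n, h1⟩
    simpa using this.symm
  · intro h i
    have : l.get i = ((List.range l.length).map ω).get ⟨i, by simp⟩ := by
      have := congrArg (fun k : List G => k[(i:ℕ)]?) h
      simpa using this
    rw [this]; simp

lemma exit_eq [Countable G] [MeasurableSpace G] [MeasurableSingletonClass G]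
    {μ : G → ℝ} {P : Measure (ℕ → G)} (hP : IsWalkMeasure μ P) {R : ℝ} {y : G}
    (hy : ¬ greenDist μ 1 y ≤ R) :
    exitLaw μ P R y = Hk (pk μ) {z | greenDist μ 1 z ≤ R} 1 y := by
  set B := {z | greenDist μ 1 z ≤ R} with hB
  have hyB : y ∉ B := hy
  have hE : {ω : ℕ → G | ∃ n : ℕ, (∀ k < n, greenDist μ 1 (walkPos k ω) ≤ R) ∧
      ¬ greenDist μ 1 (walkPos n ω) ≤ R ∧ walkPos n ω = y}
      = ⋃ l : {l : List G // okp B 1 y l}, cyl (l : List G) := by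
    ext ω
    simp only [Set.mem_ofPred_eq, Set.mem_iUnion, Subtype.exists, exists_prop]
    constructor
    · rintro ⟨n, h1, h2, h3⟩
      refine ⟨(List.range n).map ω, (okp_walk B y n ω).2 ⟨h1, h3⟩, ?_⟩
      rw [mem_cyl]; simp
    · rintro ⟨l, h1, h2⟩
      rw [mem_cyl] at h2
      rw [h2, okp_walk] at h1
      exact ⟨l.length, h1.1, by rw [h1.2]; exact hy, h1.2⟩
  rw [exitLaw, hE, measure_iUnion, Hk_list']
  · refine tsum_congr fun l => ?_
    have := hP.2 (l : List G).length (l : List G).get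
    refine Eq.trans this ?_
    rw [← List.prod_ofFn]
    congr 1
    refine List.ext_get (by simp) fun n h1 h2 => by simp
  · rintro ⟨l, hl⟩ ⟨k, hk⟩ hne
    refine Set.disjoint_left.2 fun ω h1 h2 => hne ?_
    simp only at h1 h2
    rw [mem_cyl] at h1 h2
    rw [h1, okp_walk] at hl
    rw [h2, okp_walk] at hk
    have : l.length = k.length := by
      rcases lt_trichotomy l.length k.length with h | h | h
      · exact absurd (hl.2 ▸ hk.1 _ h) hyB
      · exact h
      · exact absurd (hk.2 ▸ hl.1 _ h) hyB
    apply Subtype.ext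
    simp only
    rw [h1, h2, this]
  · intro l
    have : cyl (l : List G) = ⋂ i : Fin (l : List G).length, (fun ω : ℕ → G => ω i) ⁻¹' {(l : List G).get i} := by
      ext ω; simp [cyl]
    rw [this]
    exact MeasurableSet.iInter fun i => (measurable_pi_apply _) (measurableSet_singleton _)

end Part5

section Part6
set_option linter.unusedSectionVars false
structure WS (μ : G → ℝ) (S : Finset G) (ρ η : ℝ) (δ V : ℕ) : Prop where
  h0 : ∀ g, 0 ≤ μ g
  hsym : IsSymmetric μ
  hS : Generates S
  hmem : ∀ s, s ∈ S ↔ μ s ≠ 0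
  h1 : ∑ s ∈ S, μ s = 1
  η0 : 0 < η
  η1 : η ≤ 1
  hη : ∀ s ∈ S, η ≤ μ s
  ρ0 : 0 < ρ
  ρ1 : ρ < 1
  hρ : ∀ n g, uu μ S n g ≤ ρ ^ n
  hδ : IsHyperbolicWith (wordDist S) (δ : ℝ)
  hV1 : 1 ≤ V
  hV : ∀ n : ℕ, ∃ B : Finset G, (∀ g, g ∈ B ↔ wordLength S g ≤ n) ∧ B.card ≤ V ^ n

variable {μ : G → ℝ} {S : Finset G} {ρ η : ℝ} {δ V : ℕ}

lemma WS.hSi (W : WS μ S ρ η δ V) (s : G) : s ∈ S ↔ s⁻¹ ∈ S := by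
  rw [W.hmem, W.hmem, W.hsym]

lemma WS.gen1 (W : WS μ S ρ η δ V) {g : G} (h : wordLength S g = 1) : g ∈ S := by
  obtain ⟨l, hl, hl', hp⟩ := wl_exists W.hS g
  rw [h, List.length_eq_one_iff] at hl
  obtain ⟨a, rfl⟩ := hl
  simp at hp hl'
  subst hp
  rcases hl' with h | h
  · exact h
  · exact (W.hSi a).2 h

lemma WS.pk_symm (W : WS μ S ρ η δ V) (x y : G) : pk μ x y = pk μ y x := by
  rw [pk, pk, ← W.hsym]; simp

lemma WS.tsum_S (W : WS μ S ρ η δ V) (f : G → ℝ≥0∞) :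
    ∑' s, ENNReal.ofReal (μ s) * f s = ∑ s ∈ S, ENNReal.ofReal (μ s) * f s := by
  refine tsum_eq_sum fun s hs => ?_
  rw [W.hmem, not_not] at hs
  simp [hs]

lemma WS.pk_sum (W : WS μ S ρ η δ V) (x : G) : ∑' z, pk μ x z ≤ 1 := by
  have := tsum_pk μ x (fun _ => 1)
  simp only [mul_one] at this
  have h2 := W.tsum_S (fun _ => 1)
  simp only [mul_one] at h2
  rw [this, h2, ← ENNReal.ofReal_sum_of_nonneg (fun _ _ => W.h0 _), W.h1]
  simp

lemma WS.uu_nonneg (W : WS μ S ρ η δ V) (n : ℕ) (g : G) : 0 ≤ uu μ S n g := by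
  induction n generalizing g with
  | zero => exact Set.indicator_nonneg (fun _ _ => zero_le_one) _
  | succ n ih => exact Finset.sum_nonneg fun s _ => mul_nonneg (W.h0 s) (ih _)

lemma WS.qk_uu (W : WS μ S ρ η δ V) (n : ℕ) (x y : G) :
    qk (pk μ) univ n x y = ENNReal.ofReal (uu μ S n (y⁻¹ * x)) := by
  induction n generalizing x with
  | zero =>
    by_cases h : x = y
    · subst h; simp [qk, dl, uu]
    · have : y⁻¹ * x ∉ ({1} : Set G) := by
        simp only [Set.mem_singleton_iff]
        intro h2; exact h (inv_mul_eq_one.1 h2).symm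
      simp [qk, dl, uu, h, Set.indicator_of_notMem this]
  | succ n ih =>
    simp only [qk]
    rw [tsum_pk, ch_mem (mem_univ x), one_mul, W.tsum_S]
    simp only [uu, mop]
    rw [ENNReal.ofReal_sum_of_nonneg (fun s _ => mul_nonneg (W.h0 s) (W.uu_nonneg _ _))]
    refine Finset.sum_congr rfl fun s _ => ?_
    rw [ih, ENNReal.ofReal_mul (W.h0 s), mul_assoc]

lemma WS.qk_le (W : WS μ S ρ η δ V) (A : Set G) (n : ℕ) (x y : G) :
    qk (pk μ) A n x y ≤ ENNReal.ofReal ρ ^ n := by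
  refine (qk_mono _ (subset_univ A) n x y).trans ?_
  rw [W.qk_uu, ← ENNReal.ofReal_pow W.ρ0.le]
  exact ENNReal.ofReal_le_ofReal (W.hρ _ _)

lemma WS.tail (W : WS μ S ρ η δ V) (A : Set G) (T : ℕ) (x y : G)
    (h : ∀ n < T, qk (pk μ) A n x y = 0) :
    Hk (pk μ) A x y ≤ ENNReal.ofReal (ρ ^ T / (1 - ρ)) := by
  have h1 : Hk (pk μ) A x y = ∑' n, qk (pk μ) A (n + T) x y := by
    have h2 := Summable.sum_add_tsum_nat_add' (f := fun n => qk (pk μ) A n x y) (k := T)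
      ENNReal.summable
    rw [Hk, ← h2, Finset.sum_eq_zero, zero_add]
    intro i hi; exact h i (Finset.mem_range.1 hi)
  rw [h1]
  refine (ENNReal.tsum_le_tsum fun n => W.qk_le A (n+T) x y).trans ?_
  simp only [pow_add]
  rw [ENNReal.tsum_mul_right, ENNReal.tsum_geometric, div_eq_mul_inv,
    ENNReal.ofReal_mul (pow_nonneg W.ρ0.le _), ENNReal.ofReal_pow W.ρ0.le,
    ENNReal.ofReal_inv_of_pos (by linarith [W.ρ1]), ENNReal.ofReal_sub _ W.ρ0.le, mul_comm]
  simp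

lemma WS.fin (W : WS μ S ρ η δ V) (A : Set G) (x y : G) : Hk (pk μ) A x y ≠ ⊤ :=
  ne_top_of_le_ne_top ENNReal.ofReal_ne_top (W.tail A 0 x y (by simp))

lemma pk_ne {x y : G} (W : WS μ S ρ η δ V) (h : pk μ x y ≠ 0) : wordLength S (x⁻¹ * y) ≤ 1 := by
  apply wl_gen
  rw [W.hmem]; intro h2; exact h (by simp [pk, h2])

lemma WS.path_len (W : WS μ S ρ η δ V) (c : ℕ → G) (n : ℕ)
    (hc : ∀ i < n, wordLength S ((c i)⁻¹ * c (i+1)) ≤ 1) : wordLength S ((c 0)⁻¹ * c n) ≤ n := by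
  induction n with
  | zero => simp [wl_one]
  | succ n ih =>
    have h1 := ih fun i hi => hc i (by omega)
    have h2 := hc n (by omega)
    have h3 := wl_mul W.hS ((c 0)⁻¹ * c n) ((c n)⁻¹ * c (n+1))
    have : (c 0)⁻¹ * c n * ((c n)⁻¹ * c (n+1)) = (c 0)⁻¹ * c (n+1) := by group
    rw [this] at h3; omega

lemma WS.qk_zero (W : WS μ S ρ η δ V) (A : Set G) {n : ℕ} {x y : G}
    (h : n < wordLength S (x⁻¹ * y)) : qk (pk μ) A n x y = 0 := by
  by_contra hne
  obtain ⟨c, c0, cn, hc⟩ := qk_pos_path hne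
  have := W.path_len c n fun i hi => pk_ne W (hc i hi).2
  rw [c0, cn] at this; omega

lemma WS.lower (W : WS μ S ρ η δ V) (A : Set G) (x : G) (c : ℕ → G) (n : ℕ)
    (hA : ∀ i < n, c i ∈ A) (hc : ∀ i < n, (c i)⁻¹ * c (i+1) ∈ S) :
    Hk (pk μ) A x (c 0) * ENNReal.ofReal η ^ n ≤ Hk (pk μ) A x (c n) := by
  induction n with
  | zero => simp
  | succ n ih =>
    rw [pow_succ, ← mul_assoc]
    refine le_trans ?_ (Hk_right (pk μ) x (hA n (by omega)) (c (n+1)))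
    refine mul_le_mul' (ih (fun i hi => hA i (by omega)) fun i hi => hc i (by omega)) ?_
    exact ENNReal.ofReal_le_ofReal (W.hη _ (hc n (by omega)))

lemma WS.geod (W : WS μ S ρ η δ V) (x y : G) : ∃ c : ℕ → G, c 0 = x ∧
    c (wordLength S (x⁻¹ * y)) = y ∧
    (∀ i j, i ≤ j → j ≤ wordLength S (x⁻¹ * y) → wordLength S ((c i)⁻¹ * c j) = j - i) ∧
    (∀ i < wordLength S (x⁻¹ * y), (c i)⁻¹ * c (i+1) ∈ S) := by
  obtain ⟨p, p0, pn, hp⟩ := wl_geodpath W.hS (x⁻¹ * y)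
  have e : ∀ i j, (x * p i)⁻¹ * (x * p j) = (p i)⁻¹ * p j := fun i j => by group
  refine ⟨fun i => x * p i, by simp [p0], by simp [pn], ?_, ?_⟩
  · intro i j hij hj
    rw [e]; exact hp i j hij hj
  · intro i hi
    rw [e]; apply W.gen1; rw [hp i (i+1) (by omega) (by omega)]; omega

lemma WS.gr_lower (W : WS μ S ρ η δ V) (x y : G) :
    ENNReal.ofReal η ^ (wordLength S (x⁻¹ * y)) ≤ Hk (pk μ) univ x y := by
  obtain ⟨c, c0, cn, -, hc⟩ := W.geod x y
  have := W.lower univ x c _ (fun _ _ => mem_univ _) hc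
  rw [cn, c0] at this
  refine le_trans ?_ this
  exact le_mul_of_one_le_left' (Hk_self _ _ _)

lemma WS.gr_pos (W : WS μ S ρ η δ V) (x y : G) : Hk (pk μ) univ x y ≠ 0 := by
  refine (lt_of_lt_of_le ?_ (W.gr_lower x y)).ne'
  exact ENNReal.pow_pos (by simpa using W.η0) _

lemma WS.gr_diag (W : WS μ S ρ η δ V) (x : G) : Hk (pk μ) univ x x = Hk (pk μ) univ 1 1 := by
  simp only [Hk, W.qk_uu]; simp

lemma WS.gr_symm (W : WS μ S ρ η δ V) (x y : G) : Hk (pk μ) univ x y = Hk (pk μ) univ y x :=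
  Hk_symm W.pk_symm (mem_univ _) (mem_univ _)

/-- divergence -/
lemma WS.diverge (W : WS μ S ρ η δ V) (w : G) (r : ℝ) (c : ℕ → G) (k : ℕ) :
    ∀ a b : ℕ, a ≤ b → b - a ≤ 2 ^ k → (∀ i, a ≤ i → i ≤ b → r ≤ wordDist S (c i) w) →
    (∀ i, a ≤ i → i < b → wordLength S ((c i)⁻¹ * c (i+1)) ≤ 1) →
    r - 1 / 2 - δ * k ≤ gromov (wordDist S) w (c a) (c b) := by
  induction k with
  | zero =>
    intro a b hab hk hr hc
    have h1 := hr a le_rfl hab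
    have h2 := hr b hab le_rfl
    have h3 : wordDist S (c a) (c b) ≤ 1 := by
      rcases Nat.eq_or_lt_of_le hab with h | h
      · subst h; rw [wd_self]; exact zero_le_one
      · have : b = a + 1 := by simp at hk; omega
        subst this
        have := hc a le_rfl h
        rw [wordDist]; exact_mod_cast this
    simp only [gromov]; push_cast; linarith
  | succ k ih =>
    intro a b hab hk hr hc
    rw [pow_succ] at hk
    set m := a + (b - a) / 2 with hm
    have h1 := ih a m (by omega) (by omega) (fun i h1 h2 => hr i h1 (by omega))
      (fun i h1 h2 => hc i h1 (by omega))
    have h2 := ih m b (by omega) (by omega) (fun i h1 h2 => hr i (by omega) h2)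
      (fun i h1 h2 => hc i (by omega) h2)
    have h3 := W.hδ w (c m) (c a) (c b)
    rw [GHM.gr_symm W.hS w (c m) (c a)] at h3
    have := le_min h1 h2
    push_cast; linarith

end Part6

section Part7
set_option linter.unusedSectionVars false
def Inv (μ : G → ℝ) (x : G) (D : Set G) (E : ℝ≥0∞) : Prop :=
  ∃ lam : G → ℝ≥0∞, (∀ v, v ∉ D → lam v = 0) ∧
    (∀ t, ∑' v, lam v * Hk (pk μ) univ v t ≤ Hk (pk μ) univ 1 t) ∧
    Hk (pk μ) univ 1 x ≤ ∑' v, lam v * Hk (pk μ) univ v x + E * Hk (pk μ) univ 1 x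

lemma Inv_start (μ : G → ℝ) (x : G) : Inv μ x {1} 0 := by
  refine ⟨dl 1, ?_, ?_, ?_⟩
  · intro v hv
    have : (1 : G) ≠ v := fun h => hv (by simp [h])
    simp [dl, this]
  · intro t; rw [tsum_dl_left]
  · rw [tsum_dl_left]; exact le_self_add

lemma Inv_mono {μ : G → ℝ} {x : G} {D : Set G} {E E' : ℝ≥0∞} (h : Inv μ x D E) (hE : E ≤ E') :
    Inv μ x D E' := by
  obtain ⟨lam, h1, h2, h3⟩ := h
  refine ⟨lam, h1, h2, h3.trans ?_⟩
  gcongr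

lemma Inv_step {μ : G → ℝ} {x : G} {D : Set G} {E : ℝ≥0∞} (h : Inv μ x D E) (D' : Set G)
    (ε : ℝ≥0∞) (hε : ∀ u ∈ D, Hk (pk μ) D'ᶜ u x ≤ ε * Hk (pk μ) univ u x) :
    Inv μ x D' (E + ε) := by
  obtain ⟨lam, h1, h2, h3⟩ := h
  have key : ∀ t, ∑' v, (∑' u, lam u * (ch D' v * Hk (pk μ) D'ᶜ u v)) * Hk (pk μ) univ v t
      = ∑' u, lam u * ∑' v, ch D' v * (Hk (pk μ) D'ᶜ u v * Hk (pk μ) univ v t) := by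
    intro t
    simp only [← ENNReal.tsum_mul_left, ← ENNReal.tsum_mul_right]
    rw [ENNReal.tsum_comm]
    refine tsum_congr fun u => tsum_congr fun v => by ring
  have LM : ∀ u t, Hk (pk μ) univ u t
      = ∑' v, ch D' v * (Hk (pk μ) D'ᶜ u v * Hk (pk μ) univ v t) + Hk (pk μ) D'ᶜ u t * ch D'ᶜ t := by
    intro u t
    have := Hk_LM (pk μ) (subset_univ D'ᶜ) u t
    rwa [compl_compl] at this
  refine ⟨fun v => ∑' u, lam u * (ch D' v * Hk (pk μ) D'ᶜ u v), ?_, ?_, ?_⟩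
  · intro v hv
    simp [ch_not hv]
  · intro t
    rw [key]
    refine le_trans (ENNReal.tsum_le_tsum fun u => ?_) (h2 t)
    refine mul_le_mul' le_rfl ?_
    rw [LM u t]; exact le_self_add
  · rw [key]
    refine h3.trans ?_
    have : ∑' v, lam v * Hk (pk μ) univ v x ≤
        ∑' u, lam u * ∑' v, ch D' v * (Hk (pk μ) D'ᶜ u v * Hk (pk μ) univ v x)
        + ε * Hk (pk μ) univ 1 x := by
      calc ∑' v, lam v * Hk (pk μ) univ v x
          ≤ ∑' u, (lam u * ∑' v, ch D' v * (Hk (pk μ) D'ᶜ u v * Hk (pk μ) univ v x)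
            + ε * (lam u * Hk (pk μ) univ u x)) := by
            refine ENNReal.tsum_le_tsum fun u => ?_
            by_cases hu : u ∈ D
            · conv_lhs => rw [LM u x]
              rw [mul_add]
              refine add_le_add le_rfl ?_
              calc lam u * (Hk (pk μ) D'ᶜ u x * ch D'ᶜ x) ≤ lam u * (ε * Hk (pk μ) univ u x) := by
                    refine mul_le_mul' le_rfl ?_
                    exact (mul_le_of_le_one_right' (ch_le _ _)).trans (hε u hu)
                _ = _ := by ring
            · rw [h1 u hu]; simp
        _ = _ := by rw [ENNReal.tsum_add, ENNReal.tsum_mul_left]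
        _ ≤ _ := by gcongr; exact h2 x
    calc _ ≤ _ := add_le_add this le_rfl
      _ = _ := by ring

variable {μ : G → ℝ} {S : Finset G} {ρ η : ℝ} {δ V : ℕ}

def rj (δ j : ℕ) : ℕ := δ * (2 * j + 1) + 1

def BB (S : Finset G) (w : G) (r : ℕ) : Set G := {g | wordLength S (w⁻¹ * g) ≤ r}

lemma WS.shadow (W : WS μ S ρ η δ V) {j : ℕ} {w u x : G}
    (hj : rj δ j < 2 ^ j) (hw : wordLength S (w⁻¹ * x) = 2 ^ j)
    (hu : gromov (wordDist S) w u x ≤ δ)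
    (hux : wordLength S (u⁻¹ * x) ≤ 2 ^ (j+1) + rj δ (j+1))
    (hC : ρ ^ (4 ^ j) / (1 - ρ) ≤ (1/2) ^ (j+2) * η ^ (2 ^ (j+1) + rj δ (j+1))) :
    Hk (pk μ) (BB S w (rj δ j))ᶜ u x ≤ ENNReal.ofReal ((1/2) ^ (j+2)) * Hk (pk μ) univ u x := by
  have hz : ∀ n < 4 ^ j, qk (pk μ) (BB S w (rj δ j))ᶜ n u x = 0 := by
    intro n hn
    by_contra hne
    obtain ⟨c, c0, cn, hc⟩ := qk_pos_path hne
    have h4 : (4:ℕ) ^ j = 2 ^ (2 * j) := by rw [pow_mul]; norm_num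
    have := W.diverge w (rj δ j + 1) c (2 * j) 0 n (by omega) (by omega) ?_
      (fun i _ hi => pk_ne W (hc i hi).2)
    · rw [c0, cn] at this
      simp only [rj] at this
      push_cast at this
      have hδ0 : (0:ℝ) ≤ δ := by positivity
      nlinarith
    · intro i _ hi
      have : rj δ j + 1 ≤ wordLength S (w⁻¹ * c i) := by
        rcases Nat.eq_or_lt_of_le hi with h | h
        · rw [h, cn, hw]; exact hj
        · have := (hc i h).1
          simp only [BB, Set.mem_compl_iff] at this
          exact Nat.lt_of_not_le this
      rw [wd_symm W.hS, wordDist]; exact_mod_cast this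
  refine (W.tail _ _ _ _ hz).trans ?_
  refine (ENNReal.ofReal_le_ofReal hC).trans ?_
  rw [ENNReal.ofReal_mul (by positivity)]
  refine mul_le_mul' le_rfl ((le_trans ?_ (W.gr_lower u x)))
  rw [← ENNReal.ofReal_pow W.η0.le]
  exact ENNReal.ofReal_le_ofReal (pow_le_pow_of_le_one W.η0.le W.η1 hux)

lemma lin_le_two_pow (a b : ℕ) : ∃ j0, ∀ j ≥ j0, a * j + b ≤ 2 ^ j := by
  refine ⟨2 * (a + b) + 4, fun j hj => ?_⟩
  have h1 : ∀ j : ℕ, 4 ≤ j → j * j ≤ 2 ^ j := by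
    intro j hj
    induction j, hj using Nat.le_induction with
    | base => norm_num
    | succ n hn ih => rw [pow_succ]; nlinarith
  have := h1 j (by omega)
  nlinarith

lemma WS.consts (W : WS μ S ρ η δ V) : ∃ j0 : ℕ, (∀ j ≥ j0, rj δ j < 2 ^ j ∧
    rj δ (j+1) + δ < 2 ^ j ∧
    ρ ^ (4 ^ j) / (1 - ρ) ≤ (1/2) ^ (j+2) * η ^ (2 ^ (j+1) + rj δ (j+1))) ∧
    (V : ℝ) ^ (rj δ j0) * (ρ ^ (2 ^ j0 - rj δ j0) / (1 - ρ)) ≤ 1 / 8 := by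
  have hρ1 : 0 < 1 - ρ := by linarith [W.ρ1]
  have hη := W.η0
  have hV : (1:ℝ) ≤ V := by exact_mod_cast W.hV1
  obtain ⟨N, hN⟩ := exists_pow_lt_of_lt_one (show 0 < min (1 - ρ) (η / 2) by positivity) W.ρ1
  obtain ⟨M, hM⟩ := exists_pow_lt_of_lt_one (show 0 < min ((1 - ρ) / 8) (1 / V) by positivity) W.ρ1
  set κ := min (1 - ρ) (η / 2) with hκ
  have κ0 : 0 < κ := by positivity
  obtain ⟨j1, hj1⟩ := lin_le_two_pow 0 (N * (5 * δ + 5))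
  obtain ⟨j2, hj2⟩ := lin_le_two_pow (2 * δ) (4 * δ + 2)
  obtain ⟨j3, hj3⟩ := lin_le_two_pow ((M + 1) * (2 * δ)) ((M + 1) * (δ + 2))
  refine ⟨max (max j1 j2) j3, ?_, ?_⟩
  · intro j hj
    have a1 := hj1 j (by omega)
    have a2 := hj2 j (by omega)
    have ej : rj δ (j+1) + δ + 1 = 2 * δ * j + (4 * δ + 2) := by simp only [rj]; ring
    have ej' : rj δ (j+1) = rj δ j + 2 * δ := by simp only [rj]; ring
    refine ⟨by omega, by omega, ?_⟩
    set A := 2 ^ (j+1) + rj δ (j+1) with hA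
    have hjlt : j < 2 ^ j := Nat.lt_two_pow_self
    have hjA : j + 2 ≤ A := by
      have : 1 ≤ rj δ (j+1) := by simp [rj]
      rw [hA, pow_succ]; omega
    have hexp : N * (A + 1) ≤ 4 ^ j := by
      have h4 : (4:ℕ) ^ j = 2 ^ j * 2 ^ j := by rw [← mul_pow]; norm_num
      have hA2 : A + 1 ≤ 2 ^ j * (5 * δ + 5) := by
        rw [hA, pow_succ]; simp only [rj]; nlinarith
      calc N * (A+1) ≤ N * (2 ^ j * (5 * δ + 5)) := Nat.mul_le_mul le_rfl hA2
        _ = 2 ^ j * (N * (5 * δ + 5)) := by ring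
        _ ≤ 2 ^ j * 2 ^ j := Nat.mul_le_mul le_rfl (by omega)
        _ = _ := h4.symm
    have hb : ρ ^ (4 ^ j) ≤ κ ^ (A + 1) := by
      calc ρ ^ (4 ^ j) ≤ ρ ^ (N * (A + 1)) := pow_le_pow_of_le_one W.ρ0.le W.ρ1.le hexp
        _ = (ρ ^ N) ^ (A + 1) := pow_mul _ _ _
        _ ≤ _ := pow_le_pow_left₀ (pow_nonneg W.ρ0.le _) hN.le _
    rw [div_le_iff₀ hρ1]
    calc ρ ^ (4 ^ j) ≤ κ ^ (A + 1) := hb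
      _ = κ ^ A * κ := pow_succ _ _
      _ ≤ (η / 2) ^ A * (1 - ρ) := by
          gcongr
          · exact min_le_right _ _
          · exact min_le_left _ _
      _ = (1/2) ^ A * η ^ A * (1 - ρ) := by rw [div_eq_mul_one_div, mul_pow]; ring
      _ ≤ _ := by
          gcongr ?_ * _ * _
          exact pow_le_pow_of_le_one (by norm_num) (by norm_num) hjA
  · set j := max (max j1 j2) j3 with hj
    have a3 := hj3 j (by omega)
    set r := rj δ j with hr
    have e : (M + 1) * (2 * δ) * j + (M + 1) * (δ + 2) = (M+1) * (r + 1) := by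
      simp only [hr, rj]; ring
    rw [e] at a3
    have hexp : M * (r + 1) ≤ 2 ^ j - r := by
      have : (M+1) * (r+1) = M * (r+1) + (r + 1) := by ring
      omega
    have hb : ρ ^ (2 ^ j - r) ≤ (min ((1 - ρ) / 8) (1 / V)) ^ (r + 1) := by
      calc _ ≤ ρ ^ (M * (r + 1)) := pow_le_pow_of_le_one W.ρ0.le W.ρ1.le hexp
        _ = (ρ ^ M) ^ (r + 1) := pow_mul _ _ _
        _ ≤ _ := pow_le_pow_left₀ (pow_nonneg W.ρ0.le _) hM.le _
    have hb2 : ρ ^ (2 ^ j - r) ≤ (1 / (V:ℝ)) ^ r * ((1 - ρ) / 8) := by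
      refine hb.trans ?_
      rw [pow_succ]
      gcongr
      · exact min_le_right _ _
      · exact min_le_left _ _
    calc (V : ℝ) ^ r * (ρ ^ (2 ^ j - r) / (1 - ρ))
        ≤ (V : ℝ) ^ r * ((1 / (V:ℝ)) ^ r * ((1 - ρ) / 8) / (1 - ρ)) := by gcongr
      _ = 1 / 8 := by
          have : (V:ℝ) ^ r * (1 / (V:ℝ)) ^ r = 1 := by
            rw [← mul_pow, mul_one_div_cancel (by positivity), one_pow]
          field_simp
          exact this

lemma WS.ancona (W : WS μ S ρ η δ V) : ∃ K0 K : ℕ, ∀ x, K0 ≤ wordLength S x →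
    ∃ z, wordLength S (z⁻¹ * x) ≤ K ∧ 2 * Hk (pk μ) univ 1 x ≤ Hk (pk μ) univ 1 z := by
  classical
  obtain ⟨j0, hj, hV⟩ := W.consts
  refine ⟨2 ^ j0, 2 ^ j0 + rj δ j0, fun x hx => ?_⟩
  obtain ⟨p, p0, pn, hp⟩ := wl_geodpath W.hS x
  set n := wordLength S x with hn
  have hn0 : n ≠ 0 := by
    have : 0 < 2 ^ j0 := by positivity
    omega
  set J := Nat.log 2 n with hJ
  have hJ1 : 2 ^ J ≤ n := Nat.pow_log_le_self 2 hn0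
  have hJ2 : n < 2 ^ (J + 1) := Nat.lt_pow_succ_log_self (by norm_num) n
  have hj0J : j0 ≤ J := Nat.le_log_of_pow_le (by norm_num) hx
  set w : ℕ → G := fun j => p (n - 2 ^ j) with hw
  have hle : ∀ j ≤ J, 2 ^ j ≤ n := fun j hj =>
    (Nat.pow_le_pow_right (by norm_num) hj).trans hJ1
  have hwx : ∀ j ≤ J, wordLength S ((w j)⁻¹ * x) = 2 ^ j := by
    intro j hjJ
    have := hp (n - 2 ^ j) n (Nat.sub_le _ _) le_rfl
    rw [pn, Nat.sub_sub_self (hle j hjJ)] at this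
    exact this
  have h1w : ∀ j ≤ J, wordLength S (w j) = n - 2 ^ j := by
    intro j hjJ
    have := hp 0 (n - 2 ^ j) (Nat.zero_le _) (Nat.sub_le _ _)
    simpa [p0] using this
  -- induction
  have main : ∀ k, k ≤ J - j0 → Inv μ x (BB S (w (J - k)) (rj δ (J - k)))
      (ENNReal.ofReal ((1/2) ^ (J - k + 1))) := by
    intro k
    induction k with
    | zero =>
      intro _
      simp only [Nat.sub_zero]
      refine Inv_mono (Inv_step (Inv_start μ x) _ (ENNReal.ofReal ((1/2) ^ (J + 2))) ?_) ?_
      · intro u hu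
        rw [Set.mem_singleton_iff] at hu
        subst hu
        obtain ⟨c1, c2, c3⟩ := hj J hj0J
        refine W.shadow c1 (hwx J le_rfl) ?_ ?_ c3
        · have e1 : wordDist S 1 (w J) = (n:ℝ) - 2 ^ J := by
            simp only [wordDist, inv_one, one_mul]
            rw [h1w J le_rfl, Nat.cast_sub hJ1]; push_cast; rfl
          have e2 : wordDist S x (w J) = 2 ^ J := by
            rw [wd_symm W.hS, wordDist, hwx J le_rfl]; push_cast; rfl
          have e3 : wordDist S 1 x = n := by simp [wordDist, hn]
          rw [gromov, e1, e2, e3]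
          have : (0:ℝ) ≤ δ := by positivity
          linarith
        · simp only [inv_one, one_mul]; omega
      · rw [zero_add]
        exact ENNReal.ofReal_le_ofReal (pow_le_pow_of_le_one (by norm_num) (by norm_num) (by omega))
    | succ k ih =>
      intro hk
      have ih' := ih (by omega)
      obtain ⟨j, hjj⟩ : ∃ j, j = J - (k+1) := ⟨_, rfl⟩
      have hjs : J - k = j + 1 := by omega
      rw [hjs] at ih'
      rw [← hjj]
      refine Inv_mono (Inv_step ih' _ (ENNReal.ofReal ((1/2) ^ (j + 2))) ?_) ?_
      · intro u hu
        have hu' : wordLength S ((w (j+1))⁻¹ * u) ≤ rj δ (j+1) := hu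
        obtain ⟨c1, c2, c3⟩ := hj j (by omega)
        have hjJ : j + 1 ≤ J := by omega
        have hxw' := hwx (j+1) hjJ
        have hxw := hwx j (by omega)
        have hpj : (2:ℕ) ^ (j+1) = 2 ^ j * 2 := pow_succ _ _
        have hww : wordLength S ((w (j+1))⁻¹ * w j) = 2 ^ j := by
          have h1 := hp (n - 2 ^ (j+1)) (n - 2 ^ j) (by omega) (by omega)
          have h2 := hle (j+1) hjJ
          simp only [hw]; omega
        refine W.shadow c1 hxw ?_ ?_ c3
        · have e1 : wordDist S (w (j+1)) (w j) = 2 ^ j := by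
            rw [wordDist, hww]; push_cast; rfl
          have e2 : wordDist S x (w j) = 2 ^ j := by
            rw [wd_symm W.hS, wordDist, hxw]; push_cast; rfl
          have e3 : wordDist S (w (j+1)) x = 2 ^ j * 2 := by
            rw [wordDist, hxw', hpj]; push_cast; rfl
          have e4 : wordDist S u (w (j+1)) ≤ rj δ (j+1) := by
            rw [wd_symm W.hS, wordDist]; exact_mod_cast hu'
          have t := wd_tri W.hS (w (j+1)) u (w j)
          rw [wd_symm W.hS (w (j+1)) u] at t
          have hyp := W.hδ (w j) u (w (j+1)) x
          have g0 : gromov (wordDist S) (w j) (w (j+1)) x = 0 := by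
            rw [gromov, e1, e2, e3]; ring
          rw [g0] at hyp
          have c2' : (rj δ (j+1) : ℝ) + δ < 2 ^ j := by exact_mod_cast c2
          have g1 : (δ:ℝ) < gromov (wordDist S) (w j) u (w (j+1)) := by
            rw [gromov]; linarith
          by_contra hc
          push Not at hc
          have := lt_min g1 hc
          linarith
        · have := wl_mul W.hS (u⁻¹ * w (j+1)) ((w (j+1))⁻¹ * x)
          have e : u⁻¹ * w (j+1) * ((w (j+1))⁻¹ * x) = u⁻¹ * x := by group
          rw [e, hxw', ← wl_inv W.hS (u⁻¹ * w (j+1))] at this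
          have e2 : (u⁻¹ * w (j+1))⁻¹ = (w (j+1))⁻¹ * u := by group
          rw [e2] at this; omega
      · rw [← ENNReal.ofReal_add (by positivity) (by positivity)]
        apply ENNReal.ofReal_le_ofReal
        apply le_of_eq; ring
  have hfin := main (J - j0) le_rfl
  rw [show J - (J - j0) = j0 by omega] at hfin
  obtain ⟨lam, l1, l2, l3⟩ := hfin
  set r := rj δ j0 with hr
  set Gx := Hk (pk μ) univ 1 x with hGx
  have hGt : Gx ≠ ⊤ := W.fin _ _ _
  have hG0 : Gx ≠ 0 := W.gr_pos _ _
  obtain ⟨B, hB, hBc⟩ := W.hV r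
  set D : Finset G := B.image (fun g => w j0 * g) with hD
  have hDmem : ∀ v, v ∈ D ↔ v ∈ BB S (w j0) r := by
    intro v
    simp only [hD, Finset.mem_image, hB, BB]
    constructor
    · rintro ⟨a, ha, rfl⟩; simpa using ha
    · intro h; exact ⟨(w j0)⁻¹ * v, h, by group⟩
  have hDc : D.card ≤ V ^ r := Finset.card_image_le.trans hBc
  have hdist : ∀ v ∈ D, wordLength S (v⁻¹ * x) ≤ 2 ^ j0 + r ∧ 2 ^ j0 - r ≤ wordLength S (v⁻¹ * x) := by
    intro v hv
    have hv' : wordLength S ((w j0)⁻¹ * v) ≤ r := (hDmem v).1 hv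
    have hxw := hwx j0 hj0J
    have t1 := wl_mul W.hS (v⁻¹ * w j0) ((w j0)⁻¹ * x)
    have t2 := wl_mul W.hS ((w j0)⁻¹ * v) (v⁻¹ * x)
    rw [show v⁻¹ * w j0 * ((w j0)⁻¹ * x) = v⁻¹ * x by group, ← wl_inv W.hS (v⁻¹ * w j0),
      show (v⁻¹ * w j0)⁻¹ = (w j0)⁻¹ * v by group] at t1
    rw [show (w j0)⁻¹ * v * (v⁻¹ * x) = (w j0)⁻¹ * x by group] at t2
    omega
  by_contra hcon
  push Not at hcon
  have hlt : ∀ v ∈ D, Hk (pk μ) univ 1 v ≤ 2 * Gx := fun v hv => (hcon v (hdist v hv).1).le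
  set b := ENNReal.ofReal (ρ ^ (2 ^ j0 - r) / (1 - ρ)) with hb
  have hsum : ∑' v, lam v * Hk (pk μ) univ v x ≤ Gx * ENNReal.ofReal (1/4) := by
    rw [tsum_eq_sum (s := D) (fun v hv => by rw [l1 v (fun h => hv ((hDmem v).2 h)), zero_mul])]
    calc ∑ v ∈ D, lam v * Hk (pk μ) univ v x ≤ ∑ v ∈ D, 2 * Gx * b := by
          refine Finset.sum_le_sum fun v hv => mul_le_mul' ?_ ?_
          · refine le_trans ?_ (hlt v hv)
            refine le_trans ?_ (l2 v)
            refine le_trans ?_ (ENNReal.le_tsum v)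
            exact le_mul_of_one_le_right' (Hk_self _ _ _)
          · exact W.tail _ _ _ _ fun m hm => W.qk_zero _ (lt_of_lt_of_le hm (hdist v hv).2)
      _ = Gx * (2 * ((D.card : ℝ≥0∞) * b)) := by
          rw [Finset.sum_const, nsmul_eq_mul]; ring
      _ ≤ Gx * (2 * ((V ^ r : ℕ) * b)) := by gcongr
      _ ≤ _ := by
          refine mul_le_mul' le_rfl ?_
          have h8 : ((V ^ r : ℕ) : ℝ≥0∞) * b ≤ ENNReal.ofReal (1/8) := by
            rw [hb, ← ENNReal.ofReal_natCast, ← ENNReal.ofReal_mul (by positivity)]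
            apply ENNReal.ofReal_le_ofReal
            push_cast; exact hV
          calc 2 * (((V ^ r : ℕ) : ℝ≥0∞) * b) ≤ 2 * ENNReal.ofReal (1/8) := by gcongr
            _ = ENNReal.ofReal (1/4) := by
              rw [show (2:ℝ≥0∞) = ENNReal.ofReal 2 by simp, ← ENNReal.ofReal_mul (by norm_num)]
              norm_num
  have h12 : ENNReal.ofReal ((1/2) ^ (j0 + 1)) ≤ ENNReal.ofReal (1/2) := by
    apply ENNReal.ofReal_le_ofReal
    have : ((1:ℝ)/2) ^ (j0+1) ≤ (1/2) ^ 1 := pow_le_pow_of_le_one (by norm_num) (by norm_num) (by omega)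
    simpa using this
  have hfinal : Gx ≤ Gx * ENNReal.ofReal (1/4) + ENNReal.ofReal (1/2) * Gx :=
    l3.trans (add_le_add hsum (mul_le_mul' h12 le_rfl))
  have := ENNReal.toReal_mono (by finiteness) hfinal
  rw [ENNReal.toReal_add (by finiteness) (by finiteness), ENNReal.toReal_mul, ENNReal.toReal_mul,
    ENNReal.toReal_ofReal (by norm_num), ENNReal.toReal_ofReal (by norm_num)] at this
  have hp : 0 < Gx.toReal := ENNReal.toReal_pos hG0 hGt
  linarith

end Part7

section Part8
set_option linter.unusedSectionVars false
variable {μ : G → ℝ} {S : Finset G} {ρ η : ℝ} {δ V : ℕ}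

lemma WS.gd_iff (W : WS μ S ρ η δ V) (x y : G) (R : ℝ) :
    greenDist μ x y ≤ R ↔ ENNReal.ofReal (Real.exp (-R)) ≤ Hk (pk μ) {y}ᶜ x y := by
  have hne : Hk (pk μ) {y}ᶜ x y ≠ 0 := by
    intro h
    have := Hk_point (pk μ) x y
    rw [h, zero_mul] at this
    exact W.gr_pos _ _ this
  have hpos : 0 < (Hk (pk μ) {y}ᶜ x y).toReal := ENNReal.toReal_pos hne (W.fin _ _ _)
  rw [ENNReal.ofReal_le_iff_le_toReal (W.fin _ _ _), greenDist, hitProb_eq W.h0,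
    ← Real.le_log_iff_exp_le hpos]
  constructor <;> intro h <;> linarith

lemma WS.gd_iff' (W : WS μ S ρ η δ V) (x y : G) (R : ℝ) :
    greenDist μ x y ≤ R ↔
      ENNReal.ofReal (Real.exp (-R)) * Hk (pk μ) univ 1 1 ≤ Hk (pk μ) univ x y := by
  rw [W.gd_iff, Hk_point (pk μ) x y, W.gr_diag y]
  exact (ENNReal.mul_le_mul_iff_left (W.gr_pos 1 1) (W.fin _ _ _)).symm

lemma WS.upper [Countable G] [MeasurableSpace G] [MeasurableSingletonClass G]
    (W : WS μ S ρ η δ V) {P : Measure (ℕ → G)} (hP : IsWalkMeasure μ P) {R : ℝ} {y : G}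
    (hy : ¬ greenDist μ 1 y ≤ R) : exitLaw μ P R y ≤ ENNReal.ofReal (Real.exp (-R)) := by
  rw [exit_eq hP hy]
  refine (Hk_mono (pk μ) (C := {y}ᶜ) ?_ 1 y).trans ?_
  · intro z hz hzy
    rw [Set.mem_singleton_iff] at hzy
    subst hzy
    exact hy hz
  · rw [W.gd_iff, not_le] at hy
    exact hy.le

lemma WS.ret (W : WS μ S ρ η δ V) {R : ℝ} {z : G}
    (hz : 2 * (ENNReal.ofReal (Real.exp (-R)) * Hk (pk μ) univ 1 1) ≤ Hk (pk μ) univ 1 z)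
    (hR : 0 < R) :
    ENNReal.ofReal (Real.exp (-R)) ≤ Hk (pk μ) {z | greenDist μ 1 z ≤ R} 1 z := by
  set B := {z | greenDist μ 1 z ≤ R} with hB
  set q := ENNReal.ofReal (Real.exp (-R)) * Hk (pk μ) univ 1 1 with hq
  have hqt : q ≠ ⊤ := ENNReal.mul_ne_top ENNReal.ofReal_ne_top (W.fin _ _ _)
  have hzB : z ∈ B := by
    have : greenDist μ 1 z ≤ R := by
      rw [W.gd_iff']
      refine le_trans ?_ hz
      rw [two_mul]; exact le_self_add
    exact this
  have h1B : (1:G) ∈ B := by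
    have : greenDist μ 1 1 ≤ R := by
      rw [W.gd_iff]
      refine le_trans ?_ (Hk_self _ _ _)
      rw [← ENNReal.ofReal_one]
      exact ENNReal.ofReal_le_ofReal (Real.exp_le_one_iff.2 (by linarith))
    exact this
  rw [Hk_symm W.pk_symm h1B hzB]
  have LM := Hk_LM (pk μ) (subset_univ B) z 1
  rw [ch_mem h1B, mul_one, W.gr_symm z 1] at LM
  have hs : ∑' v, ch Bᶜ v * (Hk (pk μ) B z v * Hk (pk μ) univ v 1) ≤ q := by
    calc _ ≤ ∑' v, (ch Bᶜ v * Hk (pk μ) B z v) * q := by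
          refine ENNReal.tsum_le_tsum fun v => ?_
          by_cases hv : v ∈ B
          · rw [ch_not (show v ∉ Bᶜ by simpa using hv)]; simp
          · rw [mul_assoc]
            have h : ¬ greenDist μ 1 v ≤ R := hv
            rw [W.gd_iff', not_le] at h
            rw [W.gr_symm v 1]
            gcongr
      _ = (∑' v, ch Bᶜ v * Hk (pk μ) B z v) * q := ENNReal.tsum_mul_right
      _ ≤ 1 * q := by gcongr; exact Hk_exit W.pk_sum B z
      _ = q := one_mul q
  have h2 : q + q ≤ q + Hk (pk μ) B z 1 := by
    rw [← two_mul]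
    refine hz.trans ?_
    rw [LM]; gcongr
  have h3 : q ≤ Hk (pk μ) B z 1 := (ENNReal.add_le_add_iff_left hqt).1 h2
  refine le_trans ?_ h3
  exact le_mul_of_one_le_right' (Hk_self _ _ _)

lemma WS.result [Countable G] [MeasurableSpace G] [MeasurableSingletonClass G]
    (W : WS μ S ρ η δ V) {P : Measure (ℕ → G)} (hP : IsWalkMeasure μ P) :
    ∃ C₁ C₂ : ℝ, 0 < C₁ ∧ 0 < C₂ ∧
      ∀ R : ℝ, 0 < R → ∀ x ∈ greenSphere μ R,
        ∃ y ∈ greenSphere μ R, greenDist μ x y ≤ C₁ ∧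
          ENNReal.ofReal (C₂ * Real.exp (-R)) ≤ exitLaw μ P R y ∧
          exitLaw μ P R y ≤ ENNReal.ofReal (Real.exp (-R)) := by
  classical
  obtain ⟨K0, K, hK⟩ := W.ancona
  set Kp := K0 + K + 1 with hKp
  set g := (Hk (pk μ) univ 1 (1:G)).toReal with hg
  have hgpos : 0 < g := ENNReal.toReal_pos (W.gr_pos _ _) (W.fin _ _ _)
  have hη := W.η0
  refine ⟨1 + |Real.log (g / η ^ Kp)|, η ^ Kp, by positivity, by positivity, ?_⟩
  intro R hR x hx
  obtain ⟨hxB, γ, hγ, hγB⟩ := hx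
  set B := {z | greenDist μ 1 z ≤ R} with hB
  have hγ1 : wordLength S γ ≤ 1 := wl_gen ((W.hmem γ).2 hγ)
  obtain ⟨z, hzx, hzH, hzB⟩ : ∃ z, wordLength S (z⁻¹ * x) ≤ Kp ∧
      ENNReal.ofReal (Real.exp (-R)) ≤ Hk (pk μ) B 1 z ∧ z ∈ B := by
    have hexp : ENNReal.ofReal (Real.exp (-R)) ≤ 1 := by
      rw [← ENNReal.ofReal_one]
      exact ENNReal.ofReal_le_ofReal (Real.exp_le_one_iff.2 (by linarith))
    by_cases hc : K0 ≤ wordLength S (x * γ⁻¹)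
    · obtain ⟨z, hz1, hz2⟩ := hK _ hc
      have hγB' := hγB
      rw [W.gd_iff'] at hγB'
      have hz3 : 2 * (ENNReal.ofReal (Real.exp (-R)) * Hk (pk μ) univ 1 1) ≤ Hk (pk μ) univ 1 z :=
        le_trans (by gcongr) hz2
      refine ⟨z, ?_, W.ret hz3 hR, ?_⟩
      · have := wl_mul W.hS (z⁻¹ * (x * γ⁻¹)) γ
        rw [show z⁻¹ * (x * γ⁻¹) * γ = z⁻¹ * x by group] at this
        omega
      · have : greenDist μ 1 z ≤ R := by
          rw [W.gd_iff']
          refine le_trans ?_ hz3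
          rw [two_mul]; exact le_self_add
        exact this
    · refine ⟨1, ?_, hexp.trans (Hk_self _ _ _), ?_⟩
      · have := wl_mul W.hS (x * γ⁻¹) γ
        rw [show x * γ⁻¹ * γ = x by group] at this
        simp only [inv_one, one_mul]; omega
      · have : greenDist μ 1 1 ≤ R := by
          rw [W.gd_iff]; exact hexp.trans (Hk_self _ _ _)
        exact this
  obtain ⟨c, c0, cn, hc1, hc2⟩ := W.geod z x
  set n := wordLength S (z⁻¹ * x) with hn
  have hex : ∃ i, i ≤ n ∧ c i ∉ B := ⟨n, le_rfl, by rw [cn]; exact hxB⟩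
  set k := Nat.find hex with hk
  obtain ⟨hkn, hkB⟩ : k ≤ n ∧ c k ∉ B := Nat.find_spec hex
  have hmin : ∀ i < k, c i ∈ B := by
    intro i hi
    by_contra h
    exact Nat.find_min hex hi ⟨by omega, h⟩
  have hk0 : k ≠ 0 := by
    intro h
    rw [h, c0] at hkB
    exact hkB hzB
  have hkB' : ¬ greenDist μ 1 (c k) ≤ R := hkB
  refine ⟨c k, ⟨hkB', (c (k-1))⁻¹ * c k, ?_, ?_⟩, ?_, ?_, W.upper hP hkB'⟩
  · rw [← W.hmem]
    have := hc2 (k-1) (by omega)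
    rwa [show k - 1 + 1 = k by omega] at this
  · rw [show c k * ((c (k-1))⁻¹ * c k)⁻¹ = c (k-1) by group]
    exact hmin (k-1) (by omega)
  · rw [W.gd_iff']
    refine le_trans ?_ (W.gr_lower x (c k))
    have hl : wordLength S (x⁻¹ * c k) ≤ Kp := by
      have := hc1 k n hkn le_rfl
      rw [cn, ← wl_inv W.hS, show ((c k)⁻¹ * x)⁻¹ = x⁻¹ * c k by group] at this
      omega
    rw [← ENNReal.ofReal_toReal (W.fin univ (1:G) 1), ← hg,
      ← ENNReal.ofReal_mul (Real.exp_pos _).le, ← ENNReal.ofReal_pow hη.le]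
    apply ENNReal.ofReal_le_ofReal
    refine le_trans ?_ (pow_le_pow_of_le_one hη.le W.η1 hl)
    have hq : 0 < g / η ^ Kp := by positivity
    calc Real.exp (-(1 + |Real.log (g / η ^ Kp)|)) * g
        ≤ Real.exp (-Real.log (g / η ^ Kp)) * g := by
          gcongr
          have := le_abs_self (Real.log (g / η ^ Kp))
          linarith
      _ = η ^ Kp := by
          rw [Real.exp_neg, Real.exp_log hq]; field_simp
  · rw [exit_eq hP hkB']
    refine le_trans ?_ (W.lower B 1 c k hmin fun i hi => hc2 i (by omega))
    rw [c0, mul_comm, ENNReal.ofReal_mul (Real.exp_pos _).le]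
    refine mul_le_mul' hzH ?_
    rw [← ENNReal.ofReal_pow hη.le]
    exact ENNReal.ofReal_le_ofReal (pow_le_pow_of_le_one hη.le W.η1 (by omega))

lemma ws_exists (hG : NonElemHyperbolic G)
    (μ : G → ℝ) (hprob : IsProbDensity μ) (hsymm : IsSymmetric μ)
    (hfin : {g : G | μ g ≠ 0}.Finite) (hgen : GeneratesSupp μ) :
    ∃ (S : Finset G) (ρ η : ℝ) (δ V : ℕ), WS μ S ρ η δ V := by
  set S := hfin.toFinset with hSdef
  have hmem : ∀ s, s ∈ S ↔ μ s ≠ 0 := by intro s; simp [hSdef]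
  have hS : Generates S := by
    rw [Generates, hSdef, Set.Finite.coe_toFinset]; exact hgen
  obtain ⟨hinf, -, hall⟩ := hG
  obtain ⟨⟨δ, hδ0, hδ⟩, hq⟩ := hall S hS
  have hpos : ∀ s ∈ S, 0 < μ s := fun s hs =>
    lt_of_le_of_ne (hprob.1 s) (Ne.symm ((hmem s).1 hs))
  have h1 : ∑ s ∈ S, μ s = 1 := by
    have := hprob.2.tsum_eq
    rwa [tsum_eq_sum (s := S) (fun s hs => by rw [hmem, not_not] at hs; exact hs)] at this
  have hSi : ∀ s, s ∈ S ↔ s⁻¹ ∈ S := fun s => by rw [hmem, hmem, hsymm]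
  obtain ⟨ρ, hρ0, hρ1, hρ⟩ := decay hprob.1 hsymm hS hSi hpos h1 hδ hq
  obtain ⟨V, hV1, hV⟩ := wl_ball hS
  have hSne : S.Nonempty := by
    rw [Finset.nonempty_iff_ne_empty]; intro h; rw [h] at h1; simp at h1
  obtain ⟨s0, hs0, hmin⟩ := S.exists_min_image μ hSne
  obtain ⟨d, hd⟩ := exists_nat_ge δ
  refine ⟨S, ρ, μ s0, d, V, hprob.1, hsymm, hS, hmem, h1, hpos s0 hs0, ?_, hmin, hρ0, hρ1, hρ, ?_,
    hV1, hV⟩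
  · rw [← h1]; exact Finset.single_le_sum (fun s _ => hprob.1 s) hs0
  · intro w x y z
    have := hδ w x y z
    linarith

end Part8

/-- **Proposition 3.9 (escape from Green balls).**  For a finitely supported symmetric
random walk on a non-elementary hyperbolic group, the exit law `ν_R` from Green balls of
radius `R` satisfies `ν_R(y) ≤ e^{-R}` everywhere on the exterior sphere, and every point
`x` of the sphere has a companion `y` at uniformly bounded Green distance with
`ν_R(y) ≥ C₂ e^{-R}`. -/
theorem exit_law_estimates
    {G : Type*} [Group G] [Countable G] [MeasurableSpace G] [MeasurableSingletonClass G]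
    (hG : NonElemHyperbolic G)
    (μ : G → ℝ) (hprob : IsProbDensity μ) (hsymm : IsSymmetric μ)
    (hfin : {g : G | μ g ≠ 0}.Finite) (hgen : GeneratesSupp μ)
    (P : Measure (ℕ → G)) (hP : IsWalkMeasure μ P) :
    (∀ R : ℝ, 0 < R → ∀ y ∈ greenSphere μ R,
        exitLaw μ P R y ≤ ENNReal.ofReal (Real.exp (-R))) ∧
    ∃ C₁ C₂ : ℝ, 0 < C₁ ∧ 0 < C₂ ∧
      ∀ R : ℝ, 0 < R → ∀ x ∈ greenSphere μ R,
        ∃ y ∈ greenSphere μ R, greenDist μ x y ≤ C₁ ∧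
          ENNReal.ofReal (C₂ * Real.exp (-R)) ≤ exitLaw μ P R y ∧
          exitLaw μ P R y ≤ ENNReal.ofReal (Real.exp (-R)) := by
  obtain ⟨S, ρ, η, δ, V, W⟩ := ws_exists hG μ hprob hsymm hfin hgen
  exact ⟨fun R _ y hy => W.upper hP hy.1, W.result hP⟩

end GHM
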